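/- Let G = A₁ ∗_C A₋₁ be a word hyperbolic group which is the amalgamated free product of two groups A₁ and A₋₁ along a virtually cyclic subgroup C. If both A₁ and A₋₁ have property (Q), then G has property (Q). -/

import Mathlib

universe u v w

section Defs

variable {G : Type u} [Group G]

/-- A finite generating set closed under inversion. -/
def IsSymmGen (X : Set G) : Prop :=
  X.Finite ∧ (∀ x ∈ X, x⁻¹ ∈ X) ∧ Subgroup.closure X = ⊤

/-- Word length of `g` with respect to `X`. -/
noncomputable def wordLength (X : Set G) (g : G) : ℕ :=
  sInf {n : ℕ | ∃ l : List G, l.length = n ∧ (∀ x ∈ l, x ∈ X) ∧ l.prod = g}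

/-- Word metric. -/
noncomputable def wordDist (X : Set G) (g h : G) : ℕ :=
  wordLength X (g⁻¹ * h)

/-- Gromov product with respect to the word metric. -/
noncomputable def gromovProd (X : Set G) (x y w : G) : ℝ :=
  ((wordDist X x w : ℝ) + (wordDist X y w : ℝ) - (wordDist X x y : ℝ)) / 2

end Defs

/-- A group is word hyperbolic if for some finite symmetric generating set the Gromov
product satisfies the hyperbolicity inequality. -/
def IsWordHyperbolic (G : Type u) [Group G] : Prop :=
  ∃ X : Set G, IsSymmGen X ∧ ∃ δ : ℝ, 0 ≤ δ ∧
    ∀ x y z w : G,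
      gromovProd X x z w ≥ min (gromovProd X x y w) (gromovProd X y z w) - δ

/-- A subgroup is quasiconvex: it is finitely generated and word lengths distort linearly. -/
def IsQuasiconvex {G : Type u} [Group G] (A : Subgroup G) : Prop :=
  ∃ Y : Set ↥A, IsSymmGen Y ∧ ∃ X : Set G, IsSymmGen X ∧ ∃ c : ℝ, 0 < c ∧
    ∀ a : ↥A, (wordLength Y a : ℝ) ≤ c * (wordLength X (a : G) : ℝ) + c

/-- Property (Q): every finitely generated subgroup is quasiconvex. -/
def HasPropertyQ (G : Type u) [Group G] : Prop :=
  ∀ H : Subgroup G, H.FG → IsQuasiconvex H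

/-- A group is virtually cyclic if it has a cyclic subgroup of finite index. -/
def IsVirtuallyCyclic (C : Type u) [Group C] : Prop :=
  ∃ Z : Subgroup C, IsCyclic ↥Z ∧ Z.FiniteIndex

/-- `G` is the amalgamated free product of its subgroups `A` and `B` along `C`:
`C = A ⊓ B`, `A ⊔ B = ⊤` and `G` has the pushout universal property. -/
structure IsAmalgamatedFreeProduct {G : Type u} [Group G] (A B C : Subgroup G) : Prop where
  le_left : C ≤ A
  le_right : C ≤ B
  inf_eq : A ⊓ B = C
  sup_eq_top : A ⊔ B = ⊤
  univ : ∀ (K : Type u) [Group K] (f : ↥A →* K) (g : ↥B →* K),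
    (∀ (c : G) (hA : c ∈ A) (hB : c ∈ B), f ⟨c, hA⟩ = g ⟨c, hB⟩) →
    ∃ h : G →* K, (∀ a : ↥A, h a = f a) ∧ (∀ b : ↥B, h b = g b)

section Words

variable {G : Type u} [Group G]

/-- A word over the alphabet `X`. -/
def IsWordOver (X : Set G) (l : List G) : Prop := ∀ x ∈ l, x ∈ X

/-- A geodesic word over `X`. -/
def IsGeodesicWord (X : Set G) (l : List G) : Prop :=
  IsWordOver X l ∧ l.length = wordLength X l.prod

/-- A `lam`-quasigeodesic word over `X`: every subword `v` satisfies
`l(v) ≤ lam * l_X(v̄) + lam`. -/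
def IsQuasigeodesicWord (X : Set G) (lam : ℝ) (l : List G) : Prop :=
  IsWordOver X l ∧
    ∀ v : List G, v <:+: l → (v.length : ℝ) ≤ lam * (wordLength X v.prod : ℝ) + lam

/-- `g` is a shortest element of the subset `S` with respect to `wordLength X`. -/
def ShortestIn (X : Set G) (g : G) (S : Set G) : Prop :=
  g ∈ S ∧ ∀ s ∈ S, wordLength X g ≤ wordLength X s

end Words

/-- `G` together with `ια, ιβ` is the pushout of `ℤ → A, 1 ↦ x` and `ℤ → B, 1 ↦ y`. -/
structure IsAmalgamOverZ {A : Type u} {B : Type v} {G : Type w}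
    [Group A] [Group B] [Group G]
    (ια : A →* G) (ιβ : B →* G) (x : A) (y : B) : Prop where
  comm : ια x = ιβ y
  gen : ια.range ⊔ ιβ.range = ⊤
  univ : ∀ (K : Type (max u v w)) [Group K] (f : A →* K) (g : B →* K),
    f x = g y → ∃ h : G →* K, h.comp ια = f ∧ h.comp ιβ = g

/-! A finitely generated subgroup `H` of a hyperbolic group is quasiconvex as soon as there is a
coarsely Lipschitz retraction of the group onto `H`. To construct one, act on the Bass–Serre tree of
the amalgam: `H` preserves a subtree `H M C` with finitely many orbits of edges. Send `g` to a
nearest point of the set of those `x ∈ H` which move one of finitely many reference edges to the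
vertex at which the path from the edge `g C` to this subtree enters it. Each of these sets is close
to a coset of an intersection of `H` with a conjugate of a factor. Such intersections are finitely
generated because `C` is virtually cyclic, hence quasiconvex in the factor by property (Q), and the
factors are themselves quasiconvex in the whole group. Right multiplication by an element of a
factor can change the vertex only for an edge of the subtree, from one of its ends to another, and
there the two projections are close to each other because `C` is virtually cyclic. -/

/-! ### Hyperbolic geometry -/

section Metric

variable {α : Type*} [PseudoMetricSpace α]

/-- The Gromov product `(x·y)_w` of a pseudometric space. -/
noncomputable def gromovProduct (x y w : α) : ℝ :=
  (dist x w + dist y w - dist x y) / 2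

/-- `p` is a nearest-point projection of `x` to `S`. -/
def IsNearest (S : Set α) (x p : α) : Prop :=
  p ∈ S ∧ ∀ q ∈ S, dist x p ≤ dist x q

/-- A `K`-quasiconvex subset. Since `(p·q)_w` is, up to a constant, the distance from `w` to a
geodesic joining `p` and `q`, this is the usual notion, phrased without geodesics. -/
def IsQuasiconvexSet (K : ℝ) (S : Set α) : Prop :=
  ∀ p ∈ S, ∀ q ∈ S, ∀ w, ∃ s ∈ S, dist w s ≤ gromovProduct p q w + K

/-- Any two points `p`, `q` of `S` are joined inside `S` by a path with at most `c * dist p q + c`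
steps of length at most `M`: this is what an undistorted subset of a metric space looks like. -/
def HasCoarsePaths (c M : ℝ) (S : Set α) : Prop :=
  ∀ p ∈ S, ∀ q ∈ S, ∃ n : ℕ, (n : ℝ) ≤ c * dist p q + c ∧ ∃ f : ℕ → α, f 0 = p ∧ f n = q ∧
    (∀ i ≤ n, f i ∈ S) ∧ ∀ i < n, dist (f i) (f (i + 1)) ≤ M

theorem IsQuasiconvexSet.mono {K K' : ℝ} {S : Set α} (hS : IsQuasiconvexSet K S) (hK : K ≤ K') :
    IsQuasiconvexSet K' S := by
  intro p hp q hq w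
  obtain ⟨s, hs, hws⟩ := hS p hp q hq w
  exact ⟨s, hs, by linarith⟩

theorem IsQuasiconvexSet.nonneg {K : ℝ} {S : Set α} (hS : IsQuasiconvexSet K S)
    (hne : S.Nonempty) : 0 ≤ K := by
  obtain ⟨p, hp⟩ := hne
  obtain ⟨s, -, hs⟩ := hS p hp p hp p
  simp only [gromovProduct, dist_self] at hs
  linarith [dist_nonneg (x := p) (y := s)]

theorem IsQuasiconvexSet.of_hausdorff {K R : ℝ} {S T : Set α} (hS : IsQuasiconvexSet K S)
    (hTS : ∀ t ∈ T, ∃ s ∈ S, dist t s ≤ R) (hST : ∀ s ∈ S, ∃ t ∈ T, dist s t ≤ R) :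
    IsQuasiconvexSet (K + 3 * R) T := by
  intro p hp q hq w
  obtain ⟨p', hp', hpp'⟩ := hTS p hp
  obtain ⟨q', hq', hqq'⟩ := hTS q hq
  obtain ⟨s, hs, hws⟩ := hS p' hp' q' hq' w
  obtain ⟨t, ht, hst⟩ := hST s hs
  refine ⟨t, ht, ?_⟩
  simp only [gromovProduct] at hws ⊢
  linarith [dist_triangle w s t, dist_triangle p' p w, dist_triangle q' q w,
    dist_triangle4 p p' q' q, dist_comm p p', dist_comm q q']

theorem isQuasiconvexSet_of_dist_le {K : ℝ} {S : Set α} (hS : ∀ p ∈ S, ∀ q ∈ S, dist p q ≤ K) :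
    IsQuasiconvexSet K S := by
  intro p hp q hq w
  refine ⟨p, hp, ?_⟩
  simp only [gromovProduct]
  linarith [hS p hp q hq, dist_triangle p q w, dist_comm p w]

variable (α) in
/-- An integer-valued, `δ`-hyperbolic pseudometric in which the integer points of geodesics exist,
such as a word metric. -/
structure IsDiscreteHyperbolic (δ : ℝ) : Prop where
  delta_nonneg : 0 ≤ δ
  exists_nat_dist : ∀ x y : α, ∃ n : ℕ, dist x y = n
  exists_dist_eq : ∀ (x y : α) (n : ℕ), (n : ℝ) ≤ dist x y →
    ∃ w, dist x w = n ∧ dist x w + dist w y = dist x y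
  min_sub_le_gromovProduct : ∀ x y z w : α,
    min (gromovProduct x y w) (gromovProduct y z w) - δ ≤ gromovProduct x z w

namespace IsDiscreteHyperbolic

variable {δ : ℝ}

theorem four_point (h : IsDiscreteHyperbolic α δ) (x y z w : α) :
    dist x z + dist y w ≤ dist x y + dist z w + 2 * δ ∨
      dist x z + dist y w ≤ dist y z + dist x w + 2 * δ := by
  have hmin := h.min_sub_le_gromovProduct x y z w
  simp only [gromovProduct] at hmin
  rcases min_le_iff.1 (sub_le_iff_le_add.1 hmin) with hxy | hyz
  · left; linarith
  · right; linarith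

theorem exists_between (h : IsDiscreteHyperbolic α δ) (x y : α) {t : ℝ} (ht : 0 ≤ t)
    (hxy : t ≤ dist x y) :
    ∃ w, t - 1 ≤ dist x w ∧ dist x w ≤ t ∧ dist x w + dist w y = dist x y := by
  obtain ⟨w, hxw, hw⟩ := h.exists_dist_eq x y ⌊t⌋₊ ((Nat.floor_le ht).trans hxy)
  exact ⟨w, by linarith [Nat.lt_floor_add_one t], by linarith [Nat.floor_le ht], hw⟩

theorem exists_isNearest (h : IsDiscreteHyperbolic α δ) {S : Set α} (hS : S.Nonempty) (x : α) :
    ∃ p, IsNearest S x p := by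
  choose f hf using h.exists_nat_dist x
  obtain ⟨p, hp, hmin⟩ := exists_minimalFor_of_wellFoundedLT (· ∈ S) f hS
  refine ⟨p, hp, fun q hq ↦ ?_⟩
  rw [hf p, hf q]
  exact_mod_cast (le_total (f p) (f q)).elim id (hmin hq)

theorem sub_le_gromovProduct_of_path (h : IsDiscreteHyperbolic α δ) {w : α} {D M : ℝ} (hM : 0 ≤ M)
    {N n : ℕ} (hn : n ≤ 2 ^ N) {f : ℕ → α} (hfar : ∀ i ≤ n, D ≤ dist (f i) w)
    (hstep : ∀ i < n, dist (f i) (f (i + 1)) ≤ M) :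
    D - M - N * δ ≤ gromovProduct (f 0) (f n) w := by
  induction N generalizing n f with
  | zero =>
    have hclose : dist (f 0) (f n) ≤ M := by
      rcases Nat.le_one_iff_eq_zero_or_eq_one.1 hn with rfl | rfl
      · simpa using hM
      · exact hstep 0 one_pos
    simp only [gromovProduct, Nat.cast_zero]
    linarith [hfar 0 n.zero_le, hfar n le_rfl]
  | succ N ih =>
    -- Split the path in the middle and apply the hyperbolicity inequality to the midpoint.
    set k := min n (2 ^ N)
    have hk : k ≤ n := min_le_left _ _
    have hleft := ih (min_le_right _ _) (f := f) (n := k) (fun i hi ↦ hfar i (hi.trans hk))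
      fun i hi ↦ hstep i (hi.trans_le hk)
    have hright := ih (n := n - k) (f := fun i ↦ f (k + i)) (by rw [pow_succ] at hn; omega)
      (fun i hi ↦ hfar _ (by omega)) fun i hi ↦ hstep _ (by omega)
    simp only [add_zero, Nat.add_sub_of_le hk] at hright
    have hmin := h.min_sub_le_gromovProduct (f 0) (f k) (f n) w
    push_cast
    linarith [le_min hleft hright]

theorem gromovProduct_le_of_isNearest (h : IsDiscreteHyperbolic α δ) {K : ℝ} {S : Set α}
    (hS : IsQuasiconvexSet K S) {x p q : α} (hp : IsNearest S x p) (hq : q ∈ S) :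
    gromovProduct x q p ≤ K + δ + 1 := by
  simp only [gromovProduct]
  have := h.delta_nonneg
  obtain ⟨w, hw_ge, -, hw⟩ := h.exists_between p x
    (t := (dist x p + dist q p - dist x q) / 2)
    (by linarith [dist_triangle x p q, dist_comm q p])
    (by linarith [dist_triangle q x p, dist_comm q x, dist_comm p x])
  obtain ⟨s, hs, hws⟩ := hS p hp.1 q hq w
  simp only [gromovProduct] at hws
  have := hp.2 s hs
  rcases h.four_point q p w x with h' | h' <;>
    linarith [dist_triangle x w s, dist_comm x w, dist_comm p w, dist_comm p q, dist_comm q x,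
      dist_comm p x]

theorem isNearest_dichotomy (h : IsDiscreteHyperbolic α δ) {K : ℝ} {S : Set α}
    (hS : IsQuasiconvexSet K S) {x y p q : α} (hp : IsNearest S x p) (hq : IsNearest S y q) :
    dist x p + dist y q + dist p q ≤ dist x y + 4 * (K + δ + 1) + 2 * δ ∨
      dist p q ≤ 2 * (K + δ + 1) + δ := by
  have hxq := h.gromovProduct_le_of_isNearest hS hp hq.1
  have hyp := h.gromovProduct_le_of_isNearest hS hq hp.1
  simp only [gromovProduct] at hxq hyp
  rcases h.four_point x y q p with h' | h'
  · left; linarith [dist_comm p q]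
  · right; linarith [dist_comm p q]

theorem dist_le_of_isNearest (h : IsDiscreteHyperbolic α δ) {K : ℝ} {S : Set α}
    (hS : IsQuasiconvexSet K S) {x y p q : α} (hp : IsNearest S x p) (hq : IsNearest S y q) :
    dist p q ≤ dist x y + (4 * (K + δ + 1) + 2 * δ) := by
  have hK := hS.nonneg ⟨p, hp.1⟩
  rcases h.isNearest_dichotomy hS hp hq with h' | h' <;>
    linarith [h.delta_nonneg, dist_nonneg (x := x) (y := y), dist_nonneg (x := x) (y := p),
      dist_nonneg (x := y) (y := q)]

theorem exists_dist_le_of_isNearest (h : IsDiscreteHyperbolic α δ) {K : ℝ} {S S' : Set α}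
    (hS : IsQuasiconvexSet K S) (hS' : IsQuasiconvexSet K S') {y y' p p' : α} (hy : y ∈ S')
    (hy' : y' ∈ S') (hp : IsNearest S y p) (hp' : IsNearest S y' p')
    (hfar : 2 * (K + δ + 1) + δ < dist p p') :
    ∃ s ∈ S', dist p s ≤ 2 * (K + δ + 1) + δ + K := by
  obtain ⟨s, hs, hps⟩ := hS' y hy y' hy' p
  refine ⟨s, hs, ?_⟩
  simp only [gromovProduct] at hps
  rcases h.isNearest_dichotomy hS hp hp' with h' | h' <;>
    linarith [dist_triangle y' p' p, dist_comm p p']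

end IsDiscreteHyperbolic

/-! ### Stability of coarse paths -/

theorem exists_mul_natLog_le (a : ℝ) {ε : ℝ} (hε : 0 < ε) :
    ∃ L : ℝ, ∀ n : ℕ, a * (Nat.log 2 n : ℝ) ≤ ε * (n + 1) + L := by
  have hlim : Filter.Tendsto (fun k : ℕ ↦ a * ((k : ℝ) ^ 1 / 2 ^ k)) Filter.atTop (nhds 0) := by
    simpa using (tendsto_pow_const_div_const_pow_of_one_lt 1 (one_lt_two (α := ℝ))).const_mul a
  obtain ⟨K, hK⟩ := Filter.eventually_atTop.1 (hlim.eventually_le_const hε)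
  refine ⟨|a| * K, fun n ↦ ?_⟩
  set k := Nat.log 2 n
  have hpow : (2 : ℝ) ^ k ≤ n + 1 := by
    rcases eq_or_ne n 0 with rfl | hn
    · simp [k]
    · exact_mod_cast (Nat.pow_log_le_self 2 hn).trans n.le_succ
  rcases le_total K k with hk | hk
  · have hlarge := hK k hk
    rw [pow_one, ← mul_div_assoc, div_le_iff₀ (by positivity)] at hlarge
    have : 0 ≤ |a| * (K : ℝ) := by positivity
    linarith [mul_le_mul_of_nonneg_left hpow hε.le]
  · calc a * (k : ℝ) ≤ |a| * K := by gcongr; exact le_abs_self a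
      _ ≤ ε * (n + 1) + |a| * K := le_add_of_nonneg_left (by positivity)

namespace IsDiscreteHyperbolic

variable {δ : ℝ}

theorem exists_sub_mul_dist_sub_le_gromovProduct (h : IsDiscreteHyperbolic α δ) {c M ε : ℝ}
    (hc : 0 ≤ c) (hM : 0 ≤ M) (hε : 0 < ε) :
    ∃ L : ℝ, ∀ (S : Set α) (w : α) (D : ℝ), HasCoarsePaths c M S → (∀ s ∈ S, D ≤ dist s w) →
      ∀ p ∈ S, ∀ q ∈ S, D - ε * dist p q - L ≤ gromovProduct p q w := by
  obtain ⟨L, hL⟩ := exists_mul_natLog_le δ (ε := ε / (c + 1)) (by positivity)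
  refine ⟨M + δ + ε + L, fun S w D hS hD p hp q hq ↦ ?_⟩
  obtain ⟨n, hn, f, rfl, rfl, hfS, hfM⟩ := hS p hp q hq
  have hpath := h.sub_le_gromovProduct_of_path hM (Nat.lt_pow_succ_log_self one_lt_two n).le
    (fun i hi ↦ hD _ (hfS i hi)) hfM
  have hlog : δ * (Nat.log 2 n : ℝ) ≤ ε * (dist (f 0) (f n) + 1) + L := by
    calc δ * (Nat.log 2 n : ℝ) ≤ ε / (c + 1) * (n + 1) + L := hL n
      _ ≤ ε / (c + 1) * ((c + 1) * (dist (f 0) (f n) + 1)) + L := by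
        gcongr
        linarith [dist_nonneg (x := f 0) (y := f n)]
      _ = ε * (dist (f 0) (f n) + 1) + L := by field_simp
  push_cast at hpath
  linarith

/-- In the proof of the stability of quasigeodesics, where `D` is the maximal distance from the
geodesic to `S` and is attained at `w`: going from `w` by `2 * D` towards `p ∈ S` one finds `y` on
the geodesic and `z ∈ S` close to it, such that going from `y` to `z` avoids `w`. -/
theorem exists_far_point (h : IsDiscreteHyperbolic α δ) {S : Set α} {w p : α} {D : ℝ} (hD : 0 ≤ D)
    (hp : p ∈ S) (hw : ∀ s ∈ S, D ≤ dist s w)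
    (hclose : ∀ y, dist w y + dist y p = dist w p → ∃ s ∈ S, dist y s ≤ D) :
    ∃ y, ∃ z ∈ S, dist w y + dist y p = dist w p ∧ dist y z ≤ D ∧ dist w y ≤ 2 * D ∧
      D - 1 ≤ gromovProduct y z w := by
  simp only [gromovProduct]
  rcases le_total (2 * D) (dist w p) with hwp | hwp
  · obtain ⟨y, hy_ge, hy_le, hy⟩ := h.exists_between w p (by positivity) hwp
    obtain ⟨z, hz, hyz⟩ := hclose y hy
    exact ⟨y, z, hz, hy, hyz, hy_le, by linarith [hw z hz, dist_comm w y]⟩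
  · refine ⟨p, p, hp, ?_⟩
    simp only [dist_self]
    exact ⟨by linarith, hD, hwp, by linarith [hw p hp]⟩

theorem exists_farthest_of_dist_add_dist_eq (h : IsDiscreteHyperbolic α δ) {S : Set α} {p q : α}
    (hp : p ∈ S) (hpq : ∃ w, dist p w + dist w q = dist p q) :
    ∃ w, ∃ D : ℕ, dist p w + dist w q = dist p q ∧ (∀ s ∈ S, (D : ℝ) ≤ dist s w) ∧
      ∀ y, dist p y + dist y q = dist p q → ∃ s ∈ S, dist y s ≤ D := by
  let P : Set ℕ := {n | ∃ w, dist p w + dist w q = dist p q ∧ ∀ s ∈ S, (n : ℝ) ≤ dist s w}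
  have hne : P.Nonempty := ⟨0, hpq.imp fun w hw ↦ ⟨hw, by simp⟩⟩
  have hbdd : BddAbove P := by
    obtain ⟨B, hB⟩ := h.exists_nat_dist p q
    refine ⟨B, ?_⟩
    rintro n ⟨w, hw, hwS⟩
    have : (n : ℝ) ≤ B := by linarith [hwS p hp, dist_nonneg (x := w) (y := q)]
    exact_mod_cast this
  obtain ⟨w, hw, hwS⟩ := Nat.sSup_mem hne hbdd
  refine ⟨w, sSup P, hw, hwS, fun y hy ↦ ?_⟩
  by_contra! hfar
  have hmem : sSup P + 1 ∈ P := by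
    refine ⟨y, hy, fun s hs ↦ ?_⟩
    obtain ⟨m, hm⟩ := h.exists_nat_dist y s
    have hlt := hfar s hs
    rw [dist_comm s y]
    rw [hm] at hlt ⊢
    exact_mod_cast hlt
  exact (le_csSup hbdd hmem).not_gt (Nat.lt_succ_self _)

theorem exists_dist_le_of_dist_add_dist_eq (h : IsDiscreteHyperbolic α δ) {c M : ℝ} (hc : 0 ≤ c)
    (hM : 0 ≤ M) :
    ∃ D₀ : ℝ, ∀ S : Set α, HasCoarsePaths c M S → ∀ p ∈ S, ∀ q ∈ S, ∀ w,
      dist p w + dist w q = dist p q → ∃ s ∈ S, dist w s ≤ D₀ := by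
  have hδ := h.delta_nonneg
  obtain ⟨L, hL⟩ := h.exists_sub_mul_dist_sub_le_gromovProduct hc hM (ε := 1 / 12) (by norm_num)
  refine ⟨2 * (|L| + 2 * δ + 1), fun S hS p hp q hq w₀ hw₀ ↦ ?_⟩
  obtain ⟨w, D, hw, hwS, hclose⟩ := h.exists_farthest_of_dist_add_dist_eq hp ⟨w₀, hw₀⟩
  obtain ⟨s, hs, hws⟩ := hclose w₀ hw₀
  refine ⟨s, hs, hws.trans ?_⟩
  have hD : (0 : ℝ) ≤ D := D.cast_nonneg
  obtain ⟨y, z, hz, hy, hyz, hwy, hyz_far⟩ := h.exists_far_point hD hp hwS fun y hy ↦ hclose y <| by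
    linarith [dist_comm p y, dist_comm p w, dist_comm w y, dist_triangle y w q,
      dist_triangle p y q]
  obtain ⟨y', z', hz', hy', hyz', hwy', hyz_far'⟩ := h.exists_far_point hD hq hwS fun y hy ↦
    hclose y <| by linarith [dist_triangle p w y, dist_triangle p y q]
  have hzz' : dist z z' ≤ 6 * D := by
    linarith [dist_triangle4 z y w z', dist_triangle w y' z', dist_comm z y, dist_comm y w]
  -- `w` lies between `y` and `y'`, while `y`, `z`, `z'`, `y'` can be joined far away from `w`.
  have hyy' : gromovProduct y y' w ≤ 0 := by
    simp only [gromovProduct]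
    linarith [dist_triangle p y q, dist_triangle y y' q, dist_comm p y, dist_comm p w,
      dist_comm w y, dist_comm w y']
  have hzz'_far := hL S w D hS hwS z hz z' hz'
  have hyz'_min := h.min_sub_le_gromovProduct y z z' w
  have hyy'_min := h.min_sub_le_gromovProduct y z' y' w
  have hcomm : gromovProduct z' y' w = gromovProduct y' z' w := by
    simp only [gromovProduct, dist_comm z' y']; ring
  have := le_abs_self L
  have := abs_nonneg L
  rcases min_le_iff.1 (sub_le_iff_le_add.1 hyz'_min) with h₁ | h₁ <;>
    rcases min_le_iff.1 (sub_le_iff_le_add.1 hyy'_min) with h₂ | h₂ <;> linarith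

theorem exists_isQuasiconvexSet_of_hasCoarsePaths (h : IsDiscreteHyperbolic α δ) {c M : ℝ}
    (hc : 0 ≤ c) (hM : 0 ≤ M) :
    ∃ K : ℝ, ∀ S : Set α, HasCoarsePaths c M S → IsQuasiconvexSet K S := by
  obtain ⟨D, hD⟩ := h.exists_dist_le_of_dist_add_dist_eq hc hM
  refine ⟨D + 1 + 2 * δ, fun S hS p hp q hq w ↦ ?_⟩
  have := h.delta_nonneg
  obtain ⟨m, hm_ge, hm_le, hm⟩ := h.exists_between p q
    (t := (dist p w + dist p q - dist w q) / 2)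
    (by linarith [dist_triangle w p q, dist_comm p w])
    (by linarith [dist_triangle p q w, dist_comm q w])
  obtain ⟨s, hs, hms⟩ := hD S hS p hp q hq m hm
  refine ⟨s, hs, ?_⟩
  simp only [gromovProduct]
  have := dist_triangle w m s
  rcases h.four_point w p m q with h' | h' <;>
    linarith [dist_comm w p, dist_comm q w, dist_comm m q]

end IsDiscreteHyperbolic

end Metric

/-! ### Word metrics -/

/-- A discrete hyperbolic pseudometric on a group in which balls around `1` are finite. With a
left-invariant pseudometric (`IsIsometricSMul G G`), this is the geometry of a word metric of a word
hyperbolic group, without reference to a generating set. -/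
structure IsProperHyperbolic (G : Type*) [Group G] [PseudoMetricSpace G] (δ : ℝ) : Prop
    extends IsDiscreteHyperbolic G δ where
  finite_closedBall : ∀ R, (Metric.closedBall (1 : G) R).Finite

section WordMetric

open scoped Pointwise

variable {G : Type*} [Group G] {X : Set G}

theorem exists_isSymmGen [Group.FG G] : ∃ X : Set G, IsSymmGen X := by
  obtain ⟨S, hS⟩ := Group.FG.out (G := G)
  refine ⟨S ∪ (S : Set G)⁻¹, S.finite_toSet.union S.finite_toSet.inv, ?_, ?_⟩
  · rintro x (hx | hx)
    · exact Or.inr (Set.inv_mem_inv.2 hx)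
    · exact Or.inl hx
  · rw [Subgroup.closure_union, Subgroup.closure_inv, sup_idem, hS]

theorem wordLength_prod_le {l : List G} (hl : ∀ x ∈ l, x ∈ X) :
    wordLength X l.prod ≤ l.length :=
  Nat.sInf_le ⟨l, rfl, hl, rfl⟩

theorem wordLength_one : wordLength X (1 : G) = 0 :=
  Nat.le_zero.1 (wordLength_prod_le (l := []) (by simp))

namespace IsSymmGen

theorem exists_word (hX : IsSymmGen X) (g : G) :
    ∃ l : List G, (∀ x ∈ l, x ∈ X) ∧ l.prod = g ∧ l.length = wordLength X g := by
  have hinv : X⁻¹ = X := Set.ext fun x ↦ ⟨fun hx ↦ inv_inv x ▸ hX.2.1 _ hx, hX.2.1 x⟩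
  have hg : g ∈ Submonoid.closure X := by
    rw [← Set.union_self X, ← congrArg (X ∪ ·) hinv, ← Subgroup.closure_toSubmonoid, hX.2.2]
    exact Subgroup.mem_top g
  obtain ⟨l, hl, hprod⟩ := Submonoid.exists_list_of_mem_closure hg
  obtain ⟨l', hlen, hl', hprod'⟩ := Nat.sInf_mem (s :=
    {n : ℕ | ∃ l : List G, l.length = n ∧ (∀ x ∈ l, x ∈ X) ∧ l.prod = g}) ⟨_, l, rfl, hl, hprod⟩
  exact ⟨l', hl', hprod', hlen⟩

theorem wordLength_mul_le (hX : IsSymmGen X) (g h : G) :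
    wordLength X (g * h) ≤ wordLength X g + wordLength X h := by
  obtain ⟨l, hl, rfl, hlen⟩ := hX.exists_word g
  obtain ⟨l', hl', rfl, hlen'⟩ := hX.exists_word h
  rw [← hlen, ← hlen', ← List.prod_append, ← List.length_append]
  exact wordLength_prod_le fun x hx ↦ (List.mem_append.1 hx).elim (hl x) (hl' x)

theorem wordLength_inv_le (hX : IsSymmGen X) (g : G) : wordLength X g⁻¹ ≤ wordLength X g := by
  obtain ⟨l, hl, rfl, hlen⟩ := hX.exists_word g
  rw [← hlen, List.prod_inv_reverse]
  refine (wordLength_prod_le fun x hx ↦ ?_).trans (by simp)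
  obtain ⟨y, hy, rfl⟩ := List.mem_map.1 (List.mem_reverse.1 hx)
  exact hX.2.1 y (hl y hy)

theorem wordLength_inv (hX : IsSymmGen X) (g : G) : wordLength X g⁻¹ = wordLength X g :=
  (hX.wordLength_inv_le g).antisymm (by simpa using hX.wordLength_inv_le g⁻¹)

theorem finite_setOf_wordLength_le (hX : IsSymmGen X) (n : ℕ) :
    {g : G | wordLength X g ≤ n}.Finite := by
  have := hX.1.to_subtype
  refine ((List.finite_length_le X n).image fun l ↦ (l.map (↑)).prod).subset fun g hg ↦ ?_
  obtain ⟨l, hl, rfl, hlen⟩ := hX.exists_word g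
  lift l to List X using hl
  exact ⟨l, (List.length_map _).symm.trans_le (hlen.trans_le hg), rfl⟩

theorem wordLength_inv_mul_le_of_forall {P : Type*} [Group P] {Y : Set P} (hX : IsSymmGen X)
    (hY : IsSymmGen Y) (f : G → P) {N : ℕ}
    (hf : ∀ g, ∀ x ∈ X, wordLength Y ((f g)⁻¹ * f (g * x)) ≤ N) (g : G) :
    wordLength Y ((f 1)⁻¹ * f g) ≤ N * wordLength X g := by
  obtain ⟨l, hl, rfl, hlen⟩ := hX.exists_word g
  rw [← hlen]
  clear hlen
  induction l using List.reverseRecOn with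
  | nil => simp [wordLength_one]
  | append_singleton l x ih =>
    have hx := hf l.prod x (hl x (by simp))
    have hmul := hY.wordLength_mul_le ((f 1)⁻¹ * f l.prod) ((f l.prod)⁻¹ * f (l.prod * x))
    rw [mul_assoc, mul_inv_cancel_left] at hmul
    rw [List.prod_append, List.prod_singleton, List.length_append, List.length_singleton, mul_add,
      mul_one]
    exact hmul.trans (add_le_add (ih fun y hy ↦ hl y (by simp [hy])) hx)

theorem exists_wordLength_le_mul {Y : Set G} (hX : IsSymmGen X) (hY : IsSymmGen Y) :
    ∃ N : ℕ, ∀ g, wordLength Y g ≤ N * wordLength X g := by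
  obtain ⟨N, hN⟩ := (hX.1.image (wordLength Y)).bddAbove
  refine ⟨N, fun g ↦ ?_⟩
  simpa using hX.wordLength_inv_mul_le_of_forall hY id
    (fun g x hx ↦ by simpa using hN (Set.mem_image_of_mem _ hx)) g

theorem wordDist_triangle (hX : IsSymmGen X) (x y z : G) :
    wordDist X x z ≤ wordDist X x y + wordDist X y z := by
  simpa only [wordDist, mul_assoc, mul_inv_cancel_left] using
    hX.wordLength_mul_le (x⁻¹ * y) (y⁻¹ * z)

theorem exists_wordDist_eq (hX : IsSymmGen X) {x y : G} {n : ℕ} (hn : n ≤ wordDist X x y) :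
    ∃ w, wordDist X x w = n ∧ wordDist X x w + wordDist X w y = wordDist X x y := by
  obtain ⟨l, hl, hprod, hlen⟩ := hX.exists_word (x⁻¹ * y)
  have hleft : wordDist X x (x * (l.take n).prod) ≤ n := by
    rw [wordDist, inv_mul_cancel_left]
    exact (wordLength_prod_le fun a ha ↦ hl a (List.mem_of_mem_take ha)).trans (by simp)
  have hright : wordDist X (x * (l.take n).prod) y ≤ l.length - n := by
    have hdrop : (x * (l.take n).prod)⁻¹ * y = (l.drop n).prod := by
      rw [inv_mul_eq_iff_eq_mul, mul_assoc, List.prod_take_mul_prod_drop, hprod,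
        mul_inv_cancel_left]
    rw [wordDist, hdrop]
    exact (wordLength_prod_le fun a ha ↦ hl a (List.mem_of_mem_drop ha)).trans (by simp)
  have htriangle := hX.wordDist_triangle x (x * (l.take n).prod) y
  have hxy : wordDist X x y = l.length := hlen.symm
  exact ⟨x * (l.take n).prod, by omega, by omega⟩

/-- The word metric as a `PseudoMetricSpace`, with `dist x y = wordDist X x y`. -/
noncomputable abbrev wordMetric (hX : IsSymmGen X) : PseudoMetricSpace G where
  dist x y := wordDist X x y
  dist_self x := by simp [wordDist, wordLength_one]
  dist_comm x y := by rw [wordDist, wordDist, ← hX.wordLength_inv, mul_inv_rev, inv_inv]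
  dist_triangle x y z := by exact_mod_cast hX.wordDist_triangle x y z

theorem isIsometricSMul_wordMetric (hX : IsSymmGen X) :
    letI := hX.wordMetric
    IsIsometricSMul G G := by
  let := hX.wordMetric
  refine ⟨fun g ↦ Isometry.of_dist_eq fun x y ↦ ?_⟩
  change (wordDist X (g * x) (g * y) : ℝ) = wordDist X x y
  simp only [wordDist, mul_inv_rev, mul_assoc, inv_mul_cancel_left]

theorem isProperHyperbolic_wordMetric (hX : IsSymmGen X) {δ : ℝ} (hδ : 0 ≤ δ)
    (h : ∀ x y z w : G, gromovProd X x z w ≥ min (gromovProd X x y w) (gromovProd X y z w) - δ) :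
    letI := hX.wordMetric
    IsProperHyperbolic G δ :=
  letI := hX.wordMetric
  { delta_nonneg := hδ
    exists_nat_dist := fun x y ↦ ⟨wordDist X x y, rfl⟩
    exists_dist_eq := fun x y n hn ↦ by
      obtain ⟨w, hxw, hw⟩ := hX.exists_wordDist_eq (x := x) (y := y) (Nat.cast_le.1 hn)
      exact ⟨w, congrArg Nat.cast hxw, (Nat.cast_add _ _).symm.trans (congrArg Nat.cast hw)⟩
    min_sub_le_gromovProduct := h
    finite_closedBall := fun R ↦ (hX.finite_setOf_wordLength_le ⌊R⌋₊).subset fun g hg ↦ by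
      have hg' : (wordDist X g 1 : ℝ) ≤ R := hg
      rw [wordDist, mul_one, hX.wordLength_inv] at hg'
      exact Nat.le_floor hg' }

end IsSymmGen

end WordMetric

section ProperHyperbolic

variable {G : Type*} [Group G] [PseudoMetricSpace G] {δ : ℝ}

theorem exists_dist_one_le {F : Set G} (hF : F.Finite) :
    ∃ R, 0 ≤ R ∧ ∀ f ∈ F, dist 1 f ≤ R := by
  obtain ⟨R, hR⟩ := (hF.image (dist 1)).bddAbove
  exact ⟨max R 0, le_max_right _ _, fun f hf ↦ (hR ⟨f, hf, rfl⟩).trans (le_max_left _ _)⟩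

section Isometric

variable [IsIsometricSMul G G]

theorem dist_eq_dist_one (x y : G) : dist x y = dist 1 (x⁻¹ * y) := by
  rw [← dist_mul_left x⁻¹ x y, inv_mul_cancel]

theorem dist_one_inv (x : G) : dist 1 x⁻¹ = dist 1 x := by
  rw [dist_comm, dist_eq_dist_one, inv_inv, mul_one]

theorem dist_self_mul (x y : G) : dist x (x * y) = dist 1 y := by
  rw [dist_eq_dist_one, inv_mul_cancel_left]

theorem IsQuasiconvexSet.preimage_mul_left {K : ℝ} {S : Set G} (hS : IsQuasiconvexSet K S)
    (g : G) : IsQuasiconvexSet K ((g * ·) ⁻¹' S) := by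
  intro p hp q hq w
  obtain ⟨s, hs, hws⟩ := hS _ hp _ hq (g * w)
  refine ⟨g⁻¹ * s, by simpa using hs, ?_⟩
  rw [← dist_mul_left g w, mul_inv_cancel_left]
  simpa only [gromovProduct, dist_mul_left] using hws

theorem IsNearest.preimage_mul_left {S : Set G} {x p : G} (hp : IsNearest S x p) (g : G) :
    IsNearest ((g * ·) ⁻¹' S) (g⁻¹ * x) (g⁻¹ * p) := by
  refine ⟨by simpa using hp.1, fun q hq ↦ ?_⟩
  have hxq := hp.2 _ hq
  rwa [dist_mul_left, ← dist_mul_left g (g⁻¹ * x), mul_inv_cancel_left]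

namespace IsProperHyperbolic

theorem exists_list_closedBall (h : IsProperHyperbolic G δ) {n : ℕ} {g : G} (hg : dist 1 g ≤ n) :
    ∃ l : List G, (∀ x ∈ l, x ∈ Metric.closedBall (1 : G) 1) ∧ l.prod = g ∧ l.length ≤ n + 1 := by
  induction n generalizing g with
  | zero =>
    rw [Nat.cast_zero] at hg
    refine ⟨[g], ?_, by simp, by simp⟩
    simpa only [List.mem_singleton, forall_eq, Metric.mem_closedBall, dist_comm g] using
      hg.trans zero_le_one
  | succ n ih =>
    rcases le_total (dist 1 g) n with hgn | hgn
    · obtain ⟨l, hl, hprod, hlen⟩ := ih hgn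
      exact ⟨l, hl, hprod, hlen.trans (Nat.le_succ _)⟩
    · obtain ⟨w, hw, hwg⟩ := h.exists_dist_eq 1 g n hgn
      obtain ⟨l, hl, hprod, hlen⟩ := ih hw.le
      refine ⟨l ++ [w⁻¹ * g], fun x hx ↦ ?_, by simp [hprod], by simpa using hlen⟩
      rcases List.mem_append.1 hx with hx | hx
      · exact hl x hx
      · rw [List.mem_singleton.1 hx, Metric.mem_closedBall, dist_comm, ← dist_eq_dist_one]
        push_cast at hg
        linarith

theorem isSymmGen_closedBall (h : IsProperHyperbolic G δ) :
    IsSymmGen (Metric.closedBall (1 : G) 1) := by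
  refine ⟨h.finite_closedBall 1, fun x hx ↦ ?_, (Subgroup.eq_top_iff' _).2 fun g ↦ ?_⟩
  · rwa [Metric.mem_closedBall, dist_comm, dist_one_inv, dist_comm]
  · obtain ⟨n, hn⟩ := h.exists_nat_dist 1 g
    obtain ⟨l, hl, rfl, -⟩ := h.exists_list_closedBall hn.le
    exact list_prod_mem fun x hx ↦ Subgroup.subset_closure (hl x hx)

theorem wordLength_closedBall_le (h : IsProperHyperbolic G δ) (g : G) :
    (wordLength (Metric.closedBall (1 : G) 1) g : ℝ) ≤ dist 1 g + 1 := by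
  obtain ⟨n, hn⟩ := h.exists_nat_dist 1 g
  obtain ⟨l, hl, rfl, hlen⟩ := h.exists_list_closedBall hn.le
  rw [hn]
  exact_mod_cast (wordLength_prod_le hl).trans hlen

theorem exists_wordLength_le (h : IsProperHyperbolic G δ) {X : Set G} (hX : IsSymmGen X) :
    ∃ N : ℕ, ∀ g, (wordLength X g : ℝ) ≤ N * (dist 1 g + 1) := by
  obtain ⟨N, hN⟩ := h.isSymmGen_closedBall.exists_wordLength_le_mul hX
  refine ⟨N, fun g ↦ ?_⟩
  calc (wordLength X g : ℝ) ≤ N * wordLength (Metric.closedBall (1 : G) 1) g :=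
        mod_cast hN g
    _ ≤ N * (dist 1 g + 1) := by gcongr; exact h.wordLength_closedBall_le g

end IsProperHyperbolic

end Isometric

end ProperHyperbolic

/-! ### Cyclic subgroups are quasiconvex -/

section Cyclic

variable {G : Type*} [Group G] [PseudoMetricSpace G] [IsIsometricSMul G G] {δ : ℝ}

namespace IsDiscreteHyperbolic

theorem le_dist_sq_of_gromovProduct_le (h : IsDiscreteHyperbolic G δ) {g w x : G} {ρ : ℝ}
    (hx : dist x (g * x) ≤ ρ) (hfar : 2 * ρ + 4 * δ < dist x w) (hgw : 8 * δ < dist w (g * w))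
    (hprod : gromovProduct w x (g * w) ≤ 3 * δ) :
    2 * dist w (g * w) - 8 * δ ≤ dist w (g * (g * w)) := by
  have := h.delta_nonneg
  have hg := dist_mul_left g
  simp only [gromovProduct] at hprod
  have hsq : gromovProduct (g * w) x (g * (g * w)) ≤ 4 * δ := by
    simp only [gromovProduct]
    rcases h.four_point (g * w) x (g * x) (g * (g * w)) with h' | h' <;>
      linarith [hg w (g * w), hg x (g * w), hg w x, dist_triangle (g * x) x (g * w),
        dist_triangle x (g * x) (g * (g * w)), dist_triangle (g * x) x (g * (g * w)), hg x w,
        dist_comm x (g * x), dist_comm w x]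
  simp only [gromovProduct] at hsq
  rcases h.four_point w (g * (g * w)) x (g * w) with h' | h' <;>
    linarith [hg w (g * w), hg x w, dist_triangle (g * x) x (g * w), dist_comm x (g * x),
      dist_triangle x (g * x) (g * w), dist_comm w x, dist_comm (g * w) x,
      dist_comm (g * (g * w)) (g * w), dist_comm (g * (g * w)) x,
      dist_triangle x (g * x) (g * (g * w)), hg x (g * w)]

/-- An isometry which moves both ends of a geodesic only little moves a point in its middle roughly
along the geodesic. -/
theorem le_dist_sq_of_dist_le (h : IsDiscreteHyperbolic G δ) {g w x y : G} {ρ : ℝ}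
    (hx : dist x (g * x) ≤ ρ) (hy : dist y (g * y) ≤ ρ) (hw : dist x w + dist w y = dist x y)
    (hxw : 2 * ρ + 4 * δ < dist x w) (hyw : 2 * ρ + 4 * δ < dist y w)
    (hgw : 8 * δ < dist w (g * w)) :
    2 * dist w (g * w) - 8 * δ ≤ dist w (g * (g * w)) := by
  have hδ := h.delta_nonneg
  have hg := dist_mul_left g
  have hprod : gromovProduct x (g * y) (g * w) ≤ δ := by
    simp only [gromovProduct]
    rcases h.four_point (g * x) x (g * y) (g * w) with h' | h' <;>
      linarith [hg x w, hg w y, hg x y, dist_triangle (g * x) x (g * w), dist_comm x (g * x),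
        dist_comm (g * y) (g * w), dist_comm y w, dist_triangle x (g * x) (g * w)]
  have hprod' : gromovProduct x y (g * w) ≤ 2 * δ := by
    simp only [gromovProduct] at hprod ⊢
    rcases h.four_point x y (g * y) (g * w) with h' | h' <;>
      linarith [hg w y, dist_triangle (g * y) y (g * w), dist_triangle y (g * y) (g * w),
        dist_comm y (g * y), dist_comm (g * y) (g * w), dist_comm y w]
  have hlow : gromovProduct w x (g * w) ≤ 3 * δ ∨ gromovProduct w y (g * w) ≤ 3 * δ := by
    simp only [gromovProduct] at hprod' ⊢
    rcases h.four_point x w y (g * w) with h' | h'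
    · left; linarith [dist_comm w x, dist_comm w y]
    · right; linarith [dist_comm w x, dist_comm w y]
  rcases hlow with hlow | hlow
  · exact h.le_dist_sq_of_gromovProduct_le hx hxw hgw hlow
  · exact h.le_dist_sq_of_gromovProduct_le hy hyw hgw hlow

/-- The local-to-global principle: if `w`, `g w`, `g² w` is nearly a geodesic, then `w`, `g w`,
`g² w`, … is a quasigeodesic. -/
theorem le_dist_pow_mul (h : IsDiscreteHyperbolic G δ) {g w : G}
    (hgw : 10 * δ + 1 < dist w (g * w))
    (hsq : 2 * dist w (g * w) - 8 * δ ≤ dist w (g * (g * w))) (m : ℕ) :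
    (m : ℝ) ≤ dist w (g ^ m * w) := by
  have hδ := h.delta_nonneg
  have hstep (m : ℕ) :
      dist w (g ^ m * w) + (dist w (g * w) - 10 * δ) ≤ dist w (g ^ (m + 1) * w) := by
    induction m with
    | zero => simp [hδ]
    | succ m ih =>
      have hg (x : G) (n : ℕ) : dist (g * x) (g ^ (n + 1) * w) = dist x (g ^ n * w) := by
        rw [pow_succ', mul_assoc, dist_mul_left]
      rcases h.four_point w (g * w) (g * (g * w)) (g ^ (m + 1 + 1) * w) with h' | h' <;>
        linarith [hg w (m + 1), hg (g * w) (m + 1), hg w m, dist_mul_left g w (g * w)]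
  induction m with
  | zero => simp
  | succ m ih => push_cast; linarith [hstep m]

theorem exists_isQuasiconvexSet_zpowers_of_le (h : IsDiscreteHyperbolic G δ) {g : G} {c : ℝ}
    (hg : ∀ m : ℕ, (m : ℝ) ≤ dist 1 (g ^ m) + c) :
    ∃ K, IsQuasiconvexSet K (Subgroup.zpowers g : Set G) := by
  obtain ⟨K, hK⟩ := h.exists_isQuasiconvexSet_of_hasCoarsePaths (c := |c| + 1) (by positivity)
    (dist_nonneg (x := 1) (y := g))
  refine ⟨K, hK _ fun p hp q hq ↦ ?_⟩
  obtain ⟨y, hy, hyg, n, hyn, hn⟩ : ∃ y ∈ Subgroup.zpowers g, dist 1 y = dist 1 g ∧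
      ∃ n : ℕ, y ^ n = p⁻¹ * q ∧ dist 1 (y ^ n) = dist 1 (g ^ n) := by
    obtain ⟨m, hm : g ^ m = p⁻¹ * q⟩ := mul_mem (inv_mem hp) hq
    obtain ⟨n, rfl | rfl⟩ := m.eq_nat_or_neg
    · exact ⟨g, Subgroup.mem_zpowers g, rfl, n, by simpa using hm, rfl⟩
    · exact ⟨g⁻¹, inv_mem (Subgroup.mem_zpowers g), dist_one_inv g, n, by simpa using hm, by
        rw [inv_pow, dist_one_inv]⟩
  refine ⟨n, ?_, fun i ↦ p * y ^ i, by simp, by simp [hyn],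
    fun i _ ↦ mul_mem hp (pow_mem hy i), fun i _ ↦ ?_⟩
  · rw [dist_eq_dist_one p q, ← hyn, hn]
    have : 0 ≤ |c| * dist 1 (g ^ n) := by positivity
    linarith [hg n, le_abs_self c]
  · simp only [pow_succ, ← mul_assoc, dist_self_mul, hyg, le_refl]

end IsDiscreteHyperbolic

namespace IsProperHyperbolic

theorem exists_lt_dist_pow_mul (h : IsProperHyperbolic G δ) {z : G} (hz : ¬ IsOfFinOrder z)
    (R : ℝ) : ∃ N : ℕ, ∀ w : G, ∃ k, 1 ≤ k ∧ k ≤ N ∧ R < dist w (z ^ k * w) := by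
  refine ⟨(Metric.closedBall (1 : G) R).ncard + 1, fun w ↦ ?_⟩
  by_contra! hcon
  have hsub : (fun k : ℕ ↦ w⁻¹ * z ^ k * w) ''
      Finset.Icc 1 ((Metric.closedBall (1 : G) R).ncard + 1) ⊆ Metric.closedBall (1 : G) R := by
    rintro _ ⟨k, hk, rfl⟩
    obtain ⟨hk_pos, hk_le⟩ := Finset.mem_Icc.1 hk
    beta_reduce
    rw [Metric.mem_closedBall, dist_comm, mul_assoc, ← dist_eq_dist_one]
    exact hcon k hk_pos hk_le
  have hcard := Set.ncard_le_ncard hsub (h.finite_closedBall R)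
  rw [Set.ncard_image_of_injective, Set.ncard_coe_finset, Nat.card_Icc] at hcard
  · omega
  · intro a b hab
    exact injective_pow_iff_not_isOfFinOrder.2 hz (mul_left_cancel (mul_right_cancel hab))

/-- A power of `z` moves the midpoint of a long geodesic from `1` to some `z ^ n` far, while moving
its end points only little; hence this power has quasigeodesic orbits. -/
theorem exists_pow_le_dist (h : IsProperHyperbolic G δ) {z : G} (hz : ¬ IsOfFinOrder z) :
    ∃ k : ℕ, 1 ≤ k ∧ ∃ c : ℝ, ∀ m : ℕ, (m : ℝ) ≤ dist 1 ((z ^ k) ^ m) + c := by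
  obtain ⟨N, hN⟩ := h.exists_lt_dist_pow_mul hz (10 * δ + 1)
  obtain ⟨ρ, _, hzρ⟩ := exists_dist_one_le ((Set.finite_Iic N).image (z ^ ·))
  have hδ := h.delta_nonneg
  obtain ⟨n, hn⟩ : ∃ n : ℕ, 2 * (2 * ρ + 4 * δ + 2) < dist 1 (z ^ n) := by
    by_contra! hcon
    refine Set.infinite_range_of_injective (injective_pow_iff_not_isOfFinOrder.2 hz)
      ((h.finite_closedBall (2 * (2 * ρ + 4 * δ + 2))).subset ?_)
    rintro _ ⟨n, rfl⟩
    rw [Metric.mem_closedBall, dist_comm]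
    exact hcon n
  obtain ⟨w, hw_ge, hw_le, hw⟩ := h.exists_between 1 (z ^ n) (t := dist 1 (z ^ n) / 2)
    (by positivity) (half_le_self dist_nonneg)
  obtain ⟨k, hk, hkN, hkw⟩ := hN w
  have hzk : dist 1 (z ^ k) ≤ ρ := hzρ _ ⟨k, hkN, rfl⟩
  have hzn : dist (z ^ n) (z ^ k * z ^ n) ≤ ρ := by
    rwa [(Commute.refl z).pow_pow k n |>.eq, dist_self_mul]
  have hsq := h.le_dist_sq_of_dist_le (by rwa [mul_one]) hzn hw (by linarith)
    (by linarith [dist_comm w (z ^ n)]) (by linarith)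
  refine ⟨k, hk, 2 * dist 1 w, fun m ↦ ?_⟩
  linarith [h.le_dist_pow_mul hkw hsq m, dist_triangle w 1 ((z ^ k) ^ m * w), dist_comm 1 w,
    dist_triangle 1 ((z ^ k) ^ m) ((z ^ k) ^ m * w), dist_self_mul ((z ^ k) ^ m) w]

theorem exists_isQuasiconvexSet_zpowers (h : IsProperHyperbolic G δ) (z : G) :
    ∃ K, IsQuasiconvexSet K (Subgroup.zpowers z : Set G) := by
  by_cases hz : IsOfFinOrder z
  · obtain ⟨R, -, hR⟩ := exists_dist_one_le (finite_zpowers.2 hz)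
    refine ⟨R, isQuasiconvexSet_of_dist_le fun p hp q hq ↦ ?_⟩
    rw [dist_eq_dist_one]
    exact hR _ (mul_mem (inv_mem hp) hq)
  · obtain ⟨k, hk, c, hc⟩ := h.exists_pow_le_dist hz
    obtain ⟨K, hK⟩ := h.exists_isQuasiconvexSet_zpowers_of_le hc
    obtain ⟨R, hR0, hR⟩ := exists_dist_one_le ((Set.finite_Ico 0 (k : ℤ)).image (z ^ ·))
    refine ⟨K + 3 * R, hK.of_hausdorff ?_ fun s hs ↦ ⟨s, ?_, by simpa using hR0⟩⟩
    · rintro _ ⟨m, rfl⟩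
      refine ⟨z ^ (k * (m / k)), ⟨m / k, by simp [zpow_mul]⟩, ?_⟩
      have hm : z ^ m = z ^ (k * (m / k)) * z ^ (m % k) := by
        rw [← zpow_add, Int.mul_ediv_add_emod]
      beta_reduce
      rw [hm, dist_comm, dist_self_mul]
      exact hR _ ⟨_, ⟨m.emod_nonneg (by omega), m.emod_lt_of_pos (by omega)⟩, rfl⟩
    · exact Subgroup.zpowers_le.2 (Subgroup.npow_mem_zpowers z k) hs

end IsProperHyperbolic

end Cyclic

/-! ### Virtually cyclic groups -/

section FiniteIndex

variable {Γ : Type*} [Group Γ]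

theorem exists_finite_forall_exists_mul_eq (H : Subgroup Γ) [H.FiniteIndex] :
    ∃ F : Set Γ, F.Finite ∧ ∀ g, ∃ h ∈ H, ∃ f ∈ F, h * f = g := by
  obtain ⟨F, hF, -⟩ := H.exists_isComplement_right 1
  refine ⟨F, hF.finite_right, fun g ↦ ?_⟩
  obtain ⟨⟨h, f⟩, rfl⟩ := hF.surjective g
  exact ⟨h, h.2, f, f.2, rfl⟩

theorem group_fg_of_finiteIndex {H : Subgroup Γ} [H.FiniteIndex] (hH : H.FG) : Group.FG Γ := by
  obtain ⟨F, hF, hcover⟩ := exists_finite_forall_exists_mul_eq H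
  have htop : H ⊔ Subgroup.closure F = ⊤ := (Subgroup.eq_top_iff' _).2 fun g ↦ by
    obtain ⟨h, hh, f, hf, rfl⟩ := hcover g
    exact Subgroup.mul_mem_sup hh (Subgroup.subset_closure hf)
  exact Group.fg_def.2 (htop ▸ hH.sup ((Subgroup.fg_iff _).2 ⟨F, rfl, hF⟩))

theorem finiteIndex_of_ne_bot [IsCyclic Γ] {D : Subgroup Γ} (hD : D ≠ ⊥) : D.FiniteIndex := by
  obtain ⟨z, hz⟩ := IsCyclic.exists_generator (α := Γ)
  obtain ⟨x, hx, hx1⟩ := D.bot_or_exists_ne_one.resolve_left hD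
  obtain ⟨n, rfl⟩ := hz x
  have hn : n ≠ 0 := fun hn ↦ hx1 (by simp [hn])
  have : Finite (Γ ⧸ D) := by
    refine Set.finite_univ_iff.1 (((Set.finite_Ico 0 |n|).image
      fun i ↦ ((z ^ i : Γ) : Γ ⧸ D)).subset fun q _ ↦ ?_)
    obtain ⟨g, rfl⟩ := QuotientGroup.mk_surjective q
    obtain ⟨i, rfl⟩ := hz g
    refine ⟨i % n, ⟨i.emod_nonneg hn, i.emod_lt_abs hn⟩, QuotientGroup.eq.2 ?_⟩
    have hi : (z ^ (i % n))⁻¹ * z ^ i = (z ^ n) ^ (i / n) := by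
      rw [← zpow_neg, ← zpow_add, ← zpow_mul]
      congr 1
      linarith [Int.mul_ediv_add_emod i n]
    beta_reduce
    rw [hi]
    exact zpow_mem hx _
  exact Subgroup.finiteIndex_of_finite_quotient

end FiniteIndex

namespace IsVirtuallyCyclic

variable {Γ : Type*} {Δ : Type*} [Group Γ] [Group Δ]

theorem of_injective (h : IsVirtuallyCyclic Γ) {f : Δ →* Γ} (hf : Function.Injective f) :
    IsVirtuallyCyclic Δ := by
  obtain ⟨Z, hZ, hfin⟩ := h
  refine ⟨Z.comap f, isCyclic_of_injective (f.subgroupComap Z) fun x y hxy ↦ ?_, ⟨?_⟩⟩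
  · exact Subtype.ext (hf (congrArg Subtype.val hxy))
  · rw [Subgroup.index_comap]
    exact (Z.instFiniteIndex_subgroupOf f.range).index_ne_zero

theorem group_fg (h : IsVirtuallyCyclic Γ) : Group.FG Γ := by
  obtain ⟨Z, hZ, hfin⟩ := h
  obtain ⟨z, rfl⟩ := (Subgroup.isCyclic_iff_exists_zpowers_eq_top Z).1 hZ
  exact group_fg_of_finiteIndex ((Subgroup.fg_iff _).2 ⟨{z},
    (Subgroup.zpowers_eq_closure z).symm, Set.finite_singleton z⟩)

theorem finiteIndex_of_infinite (h : IsVirtuallyCyclic Γ) (D : Subgroup Γ) [Infinite D] :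
    D.FiniteIndex := by
  obtain ⟨Z, hZ, hfin⟩ := h
  have hne : D.subgroupOf Z ≠ ⊥ := fun hbot ↦ by
    have hZD : Z.relIndex D ≠ 0 := (Z.instFiniteIndex_subgroupOf D).index_ne_zero
    rw [← Subgroup.inf_relIndex_right, disjoint_iff.1 (Subgroup.subgroupOf_eq_bot.1 hbot).symm,
      Subgroup.relIndex_bot_left] at hZD
    exact hZD Nat.card_eq_zero_of_infinite
  have hDZ : D.relIndex Z ≠ 0 := (finiteIndex_of_ne_bot hne).index_ne_zero
  have hZ' : Z.relIndex ⊤ ≠ 0 := (Z.instFiniteIndex_subgroupOf ⊤).index_ne_zero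
  exact ⟨Subgroup.relIndex_top_right D ▸ Subgroup.relIndex_ne_zero_trans hDZ hZ'⟩

end IsVirtuallyCyclic

section SubgroupIsVirtuallyCyclic

variable {G : Type*} [Group G] {C D : Subgroup G}

theorem fg_of_le_of_isVirtuallyCyclic (hC : IsVirtuallyCyclic C) (hDC : D ≤ C) : D.FG :=
  (Group.fg_iff_subgroup_fg D).1 (hC.of_injective (Subgroup.inclusion_injective hDC)).group_fg

theorem exists_finite_forall_mem_exists_mul_eq (hC : IsVirtuallyCyclic C) (hDC : D ≤ C)
    [Infinite D] : ∃ F : Set G, F.Finite ∧ ∀ c ∈ C, ∃ x ∈ D, ∃ f ∈ F, x * f = c := by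
  have : Infinite (D.subgroupOf C) :=
    (Subgroup.subgroupOfEquivOfLe hDC).toEquiv.infinite_iff.2 inferInstance
  have := hC.finiteIndex_of_infinite (D.subgroupOf C)
  obtain ⟨F, hF, hcover⟩ := exists_finite_forall_exists_mul_eq (D.subgroupOf C)
  refine ⟨Subtype.val '' F, hF.image _, fun c hc ↦ ?_⟩
  obtain ⟨x, hx, f, hf, hxf⟩ := hcover ⟨c, hc⟩
  exact ⟨x, hx, f, ⟨f, hf, rfl⟩, congrArg Subtype.val hxf⟩

variable [PseudoMetricSpace G] [IsIsometricSMul G G] {δ : ℝ}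

theorem IsProperHyperbolic.exists_isQuasiconvexSet_of_isVirtuallyCyclic
    (h : IsProperHyperbolic G δ) (hC : IsVirtuallyCyclic C) :
    ∃ K, IsQuasiconvexSet K (C : Set G) := by
  obtain ⟨Z, hZ, hfin⟩ := hC
  obtain ⟨z, rfl⟩ := (Subgroup.isCyclic_iff_exists_zpowers_eq_top Z).1 hZ
  obtain ⟨F, hF, hcover⟩ := exists_finite_forall_exists_mul_eq (Subgroup.zpowers z)
  obtain ⟨K, hK⟩ := h.exists_isQuasiconvexSet_zpowers (z : G)
  obtain ⟨R, hR0, hR⟩ := exists_dist_one_le (hF.image Subtype.val)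
  refine ⟨K + 3 * R, hK.of_hausdorff (fun c hc ↦ ?_) fun s hs ↦ ⟨s, ?_, by simpa using hR0⟩⟩
  · obtain ⟨_, ⟨i, rfl⟩, f, hf, hcf⟩ := hcover ⟨c, hc⟩
    refine ⟨z ^ i, ⟨i, rfl⟩, ?_⟩
    have hc' : c = z ^ i * f := by simpa using (congrArg Subtype.val hcf).symm
    rw [hc', dist_comm, dist_self_mul]
    exact hR _ ⟨f, hf, rfl⟩
  · exact Subgroup.zpowers_le.2 z.2 hs

end SubgroupIsVirtuallyCyclic

/-! ### Undistorted homomorphisms and coarse retractions -/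

section Undistorted

variable {G : Type*} [Group G] [PseudoMetricSpace G]

/-- A homomorphism from a finitely generated group which distorts lengths at most linearly. A finite
kernel is allowed, and the inclusion of a subgroup `A` is undistorted if and only if `A` is
quasiconvex. -/
def IsUndistorted {P : Type*} [Group P] (f : P →* G) : Prop :=
  ∃ Y : Set P, IsSymmGen Y ∧ ∃ c : ℝ, 0 ≤ c ∧ ∀ p, (wordLength Y p : ℝ) ≤ c * dist 1 (f p) + c

namespace IsUndistorted

variable {P : Type*} [Group P] {f : P →* G}

theorem comp_subtype (hf : IsUndistorted f) {H : Subgroup P} (hH : IsQuasiconvex H) :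
    IsUndistorted (f.comp H.subtype) := by
  obtain ⟨Y, hY, c, hc, hfc⟩ := hf
  obtain ⟨Z, hZ, X, hX, b, hb, hZX⟩ := hH
  obtain ⟨N, hN⟩ := hY.exists_wordLength_le_mul hX
  refine ⟨Z, hZ, b * (N * c) + b, by positivity, fun p ↦ ?_⟩
  calc (wordLength Z p : ℝ) ≤ b * wordLength X (p : P) + b := hZX p
    _ ≤ b * (N * wordLength Y (p : P)) + b := by gcongr; exact_mod_cast hN p
    _ ≤ b * (N * (c * dist 1 (f p) + c)) + b := by gcongr; exact hfc p
    _ ≤ (b * (N * c) + b) * dist 1 (f p) + (b * (N * c) + b) := by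
      have : 0 ≤ b * dist 1 (f p) := by positivity
      linarith

theorem exists_isQuasiconvexSet_range [IsIsometricSMul G G] {δ : ℝ} (h : IsDiscreteHyperbolic G δ)
    (hf : IsUndistorted f) : ∃ K, IsQuasiconvexSet K (Set.range f) := by
  obtain ⟨Y, hY, c, hc, hfc⟩ := hf
  obtain ⟨M, hM0, hM⟩ := exists_dist_one_le (hY.1.image f)
  obtain ⟨K, hK⟩ := h.exists_isQuasiconvexSet_of_hasCoarsePaths hc hM0
  refine ⟨K, hK _ ?_⟩
  rintro _ ⟨p, rfl⟩ _ ⟨q, rfl⟩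
  obtain ⟨l, hl, hprod, hlen⟩ := hY.exists_word (p⁻¹ * q)
  refine ⟨l.length, ?_, fun i ↦ f (p * (l.take i).prod), by simp, by simp [hprod],
    fun i _ ↦ ⟨_, rfl⟩, fun i hi ↦ ?_⟩
  · rw [hlen, dist_eq_dist_one, ← map_inv, ← map_mul]
    exact hfc _
  · simp only [List.prod_take_succ l i hi, ← mul_assoc, map_mul, dist_self_mul]
    exact hM _ ⟨_, hl _ (List.getElem_mem hi), rfl⟩

end IsUndistorted

theorem exists_dist_apply_mul_le {α : Type*} [PseudoMetricSpace α] {Γ : Type*} [Group Γ]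
    {S : Set Γ} (hS : Subgroup.closure S = ⊤) {r : Γ → α}
    (hr : ∀ x ∈ S, ∃ κ, ∀ g, dist (r g) (r (g * x)) ≤ κ) (x : Γ) :
    ∃ κ, ∀ g, dist (r g) (r (g * x)) ≤ κ := by
  have hx : x ∈ Subgroup.closure S := hS ▸ Subgroup.mem_top x
  induction hx using Subgroup.closure_induction with
  | mem x hx => exact hr x hx
  | one => exact ⟨0, fun g ↦ by rw [mul_one, dist_self]⟩
  | mul x y _ _ hx hy =>
    obtain ⟨a, ha⟩ := hx
    obtain ⟨b, hb⟩ := hy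
    refine ⟨a + b, fun g ↦ ?_⟩
    rw [← mul_assoc]
    exact (dist_triangle _ _ _).trans (add_le_add (ha g) (hb (g * x)))
  | inv x _ hx =>
    obtain ⟨a, ha⟩ := hx
    refine ⟨a, fun g ↦ ?_⟩
    simpa only [inv_mul_cancel_right, dist_comm] using ha (g * x⁻¹)

namespace IsProperHyperbolic

variable [IsIsometricSMul G G] {δ : ℝ}

theorem isUndistorted_subtype (h : IsProperHyperbolic G δ) {A : Subgroup G}
    (hA : IsQuasiconvex A) : IsUndistorted A.subtype := by
  obtain ⟨Y, hY, X, hX, c, hc, hYX⟩ := hA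
  obtain ⟨N, hN⟩ := h.exists_wordLength_le hX
  refine ⟨Y, hY, c * N + c, by positivity, fun a ↦ ?_⟩
  calc (wordLength Y a : ℝ) ≤ c * wordLength X (a : G) + c := hYX a
    _ ≤ c * (N * (dist 1 (a : G) + 1)) + c := by gcongr; exact hN a
    _ ≤ (c * N + c) * dist 1 (a : G) + (c * N + c) := by
      have : 0 ≤ c * dist 1 (a : G) := by positivity
      linarith

theorem isQuasiconvex_of_retraction (h : IsProperHyperbolic G δ) {P : Subgroup G} (hP : P.FG)
    {r : G → P} {K : ℝ} (hK : ∀ p : P, dist (r p : G) p ≤ K)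
    (hr : ∀ x, ∃ κ, ∀ g, dist (r g : G) (r (g * x)) ≤ κ) : IsQuasiconvex P := by
  have := (Group.fg_iff_subgroup_fg P).2 hP
  obtain ⟨Y, hY⟩ := exists_isSymmGen (G := P)
  choose κ hκ using hr
  obtain ⟨κ₀, hκ₀⟩ := ((h.finite_closedBall 1).image κ).bddAbove
  obtain ⟨N, hN⟩ := (((h.finite_closedBall (max κ₀ K)).preimage
    Subtype.val_injective.injOn).image (wordLength Y)).bddAbove
  have hN' (p q : P) (hpq : dist (p : G) q ≤ max κ₀ K) : wordLength Y (p⁻¹ * q) ≤ N := by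
    refine hN ⟨_, ?_, rfl⟩
    rwa [Set.mem_preimage, Metric.mem_closedBall, dist_comm, Subgroup.coe_mul, Subgroup.coe_inv,
      ← dist_eq_dist_one]
  have hpath := h.isSymmGen_closedBall.wordLength_inv_mul_le_of_forall hY r
    fun g x hx ↦ hN' _ _ (((hκ x g).trans (hκ₀ ⟨x, hx, rfl⟩)).trans (le_max_left _ _))
  refine ⟨Y, hY, _, h.isSymmGen_closedBall, 2 * N + 1, by positivity, fun p ↦ ?_⟩
  have hone : wordLength Y (r 1) ≤ N := by
    simpa using hN' 1 (r 1) (by rw [dist_comm]; exact (hK 1).trans (le_max_right _ _))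
  have hend := hN' (r p) p ((hK p).trans (le_max_right _ _))
  have hp : wordLength Y p ≤ N * wordLength (Metric.closedBall 1 1) (p : G) + 2 * N :=
    calc wordLength Y p = wordLength Y (r 1 * ((r 1)⁻¹ * r p) * ((r p)⁻¹ * p)) := by simp
      _ ≤ wordLength Y (r 1) + wordLength Y ((r 1)⁻¹ * r p) + wordLength Y ((r p)⁻¹ * p) :=
        (hY.wordLength_mul_le _ _).trans (Nat.add_le_add_right (hY.wordLength_mul_le _ _) _)
      _ ≤ _ := by linarith [hpath p]
  have hp' : (wordLength Y p : ℝ) ≤ N * wordLength (Metric.closedBall 1 1) (p : G) + 2 * N :=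
    mod_cast hp
  have : 0 ≤ (N + 1 : ℝ) * wordLength (Metric.closedBall (1 : G) 1) (p : G) := by positivity
  linarith

end IsProperHyperbolic

end Undistorted

/-! ### Bass–Serre trees -/

/-- The combinatorics of the Bass–Serre tree of an amalgam of groups `A i` along `C`, rooted at the
edge `C`: edges are left cosets of `C`, vertices are left cosets of the groups `A i`, and the edge
`g C` has an end `g A i` for each index `i`. The edge `gate i g C` is the edge at the vertex `g A i`
closest to the root, and `depth g` is the distance of the edge `g C` from the root. Hence
`g⁻¹ * gate i g ∉ C` says that `g A i` is the end of the edge `g C` which is closer to the root. -/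
structure BassSerreTree {G ι : Type*} [Group G] (A : ι → Subgroup G) (C : Subgroup G) where
  depth : G → ℕ
  gate : ι → G → G
  C_le : ∀ i, C ≤ A i
  gate_mem : ∀ i g, g⁻¹ * gate i g ∈ A i
  gate_mul : ∀ i g, ∀ a ∈ A i, gate i (g * a) = gate i g
  gate_one : ∀ i, gate i 1 = 1
  depth_gate_lt : ∀ i g, g⁻¹ * gate i g ∉ C → depth (gate i g) < depth g
  side_unique : ∀ i j g, g⁻¹ * gate i g ∉ C → g⁻¹ * gate j g ∉ C → i = j
  exists_side : ∀ g, g ∉ C → ∃ i, g⁻¹ * gate i g ∉ C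

section NormalWord

open Monoid PushoutI NormalWord

section Tail

variable {ι : Type*} {Γ : ι → Type*} {H : Type*} [∀ i, Group (Γ i)] [Group H]
  {φ : ∀ i, H →* Γ i} {d : Transversal φ}

theorem prod_of_fstIdx_eq_none {w : NormalWord d} (h : w.fstIdx = none) :
    w.prod = base φ w.head := by
  have hw : w.toWord = CoprodI.Word.empty :=
    CoprodI.Word.ext (by simpa [CoprodI.Word.fstIdx] using h)
  rw [NormalWord.prod, hw, CoprodI.Word.prod_empty, map_one, mul_one]

variable [DecidableEq ι] [∀ i, DecidableEq (Γ i)]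

/-- The normal word obtained by removing the maximal left factor in `Γ i`. -/
noncomputable def normalWordTail (i : ι) (w : NormalWord d) : NormalWord d :=
  ⟨(equivPair i w).tail, 1, (equivPair i w).normalized⟩

theorem normalWordTail_smul (i : ι) (g : Γ i) (w : NormalWord d) :
    normalWordTail i (of (φ := φ) i g • w) = normalWordTail i w := by
  simp only [normalWordTail, summand_smul_def, Equiv.apply_symm_apply]

theorem toWord_rcons_of_mem (i : ι) (p : Pair d i) (h : p.head ∈ (φ i).range) :
    (rcons i p).toWord = p.tail :=
  dif_pos ((Subgroup.IsComplement.coe_equiv_snd_eq_one_iff_mem (d.compl i) (d.one_mem _)).2 h)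

theorem fstIdx_rcons_of_notMem (i : ι) (p : Pair d i) (h : p.head ∉ (φ i).range) :
    (rcons i p).fstIdx = some i ∧ (rcons i p).toList.length = p.tail.toList.length + 1 := by
  have hsnd :=
    mt (Subgroup.IsComplement.coe_equiv_snd_eq_one_iff_mem (d.compl i) (d.one_mem _)).1 h
  have hword : (rcons i p).toWord = CoprodI.Word.cons _ p.tail p.fstIdx_ne hsnd := dif_neg hsnd
  exact ⟨by rw [hword, CoprodI.Word.fstIdx_cons], by rw [hword]; rfl⟩

theorem head_rcons_of_head_eq_one (i : ι) (p : Pair d i) (h : p.head = 1) :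
    (rcons i p).head = 1 := by
  have hfst := (Subgroup.IsComplement.coe_equiv_fst_eq_one_iff_mem (d.compl i) (g := p.head)
    (one_mem _)).2 (by rw [h]; exact d.one_mem i)
  apply d.injective i
  rw [map_one, ← hfst]
  exact MonoidHom.apply_ofInjective_symm (d.injective i) _

theorem equivPair_symm_of_head_eq_one (i : ι) (p : Pair d i) (h : p.head = 1) :
    (equivPair i).symm p = ⟨p.tail, 1, p.normalized⟩ :=
  NormalWord.ext (head_rcons_of_head_eq_one i p h)
    (congrArg CoprodI.Word.toList (toWord_rcons_of_mem i p (h ▸ one_mem _)))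

theorem equivPair_normalWordTail (i : ι) (w : NormalWord d) :
    equivPair i (normalWordTail i w) = { equivPair i w with head := 1 } :=
  (Equiv.eq_symm_apply _).1
    (equivPair_symm_of_head_eq_one i { equivPair i w with head := 1 } rfl).symm

theorem head_smul_normalWordTail (i : ι) (w : NormalWord d) :
    of (φ := φ) i (equivPair i w).head • normalWordTail i w = w := by
  rw [summand_smul_def, equivPair_normalWordTail, Equiv.symm_apply_eq, mul_one]

theorem rcons_equivPair (i : ι) (w : NormalWord d) : rcons i (equivPair i w) = w :=
  (equivPair i).symm_apply_apply w

theorem length_normalWordTail_lt (i : ι) (w : NormalWord d)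
    (h : (equivPair i w).head ∉ (φ i).range) :
    (normalWordTail i w).toList.length < w.toList.length := by
  have hlen := (fstIdx_rcons_of_notMem i _ h).2
  rw [rcons_equivPair] at hlen
  exact Nat.lt_of_succ_le hlen.ge

theorem fstIdx_eq_some_iff (i : ι) (w : NormalWord d) :
    w.fstIdx = some i ↔ (equivPair i w).head ∉ (φ i).range := by
  refine ⟨fun h hmem ↦ (equivPair i w).fstIdx_ne ?_, fun h ↦ ?_⟩
  · rw [← toWord_rcons_of_mem i _ hmem, rcons_equivPair, h]
  · rw [← rcons_equivPair i w]
    exact (fstIdx_rcons_of_notMem i _ h).1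

theorem normalWordTail_empty (i : ι) : normalWordTail i (empty : NormalWord d) = empty := by
  have hpair : equivPair i (empty : NormalWord d) = default :=
    (Equiv.eq_symm_apply _).1 (equivPair_symm_of_head_eq_one i default rfl).symm
  exact NormalWord.ext rfl (by simp only [normalWordTail, hpair]; rfl)

end Tail

section Tree

variable {G ι : Type*} [Group G] {A : ι → Subgroup G} {C : Subgroup G} {hC : ∀ i, C ≤ A i}
  (e : G ≃* PushoutI fun i ↦ Subgroup.inclusion (hC i))

section Gate

variable [DecidableEq ι] [∀ i, DecidableEq (A i)]
  (d : Transversal fun i ↦ Subgroup.inclusion (hC i))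

/-- The normal form of `g⁻¹`: left cosets of `A i` correspond to orbits of `A i` under left
multiplication of normal words. -/
noncomputable def invWord (g : G) : NormalWord d := e g⁻¹ • empty

/-- The element whose `invWord` is obtained from that of `g` by removing the maximal left factor in
`A i`. -/
noncomputable def invWordGate (i : ι) (g : G) : G :=
  (e.symm (normalWordTail i (invWord e d g)).prod)⁻¹

theorem prod_invWord (g : G) : (invWord e d g).prod = e g⁻¹ := by
  rw [invWord, prod_smul, prod_empty, mul_one]

theorem invWord_invWordGate (i : ι) (g : G) :
    invWord e d (invWordGate e d i g) = normalWordTail i (invWord e d g) := by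
  rw [invWord, invWordGate, inv_inv, e.apply_symm_apply, prod_smul_empty]

variable {e}

theorem inv_mul_invWordGate (he : ∀ i (a : A i), e a = of i a) (i : ι) (g : G) :
    g⁻¹ * invWordGate e d i g = ((equivPair i (invWord e d g)).head : G) := by
  rw [invWordGate, mul_inv_eq_iff_eq_mul]
  apply e.injective
  rw [map_mul, e.apply_symm_apply, he, ← prod_smul, head_smul_normalWordTail, prod_invWord]

theorem inv_mul_invWordGate_notMem_iff (he : ∀ i (a : A i), e a = of i a) (i : ι) (g : G) :
    g⁻¹ * invWordGate e d i g ∉ C ↔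
      (equivPair i (invWord e d g)).head ∉ (Subgroup.inclusion (hC i)).range := by
  rw [inv_mul_invWordGate d he, Subgroup.inclusion_range, Subgroup.mem_subgroupOf]

theorem invWord_mul (he : ∀ i (a : A i), e a = of i a) (i : ι) (g : G) (a : A i) :
    invWord e d (g * a) = of (φ := fun i ↦ Subgroup.inclusion (hC i)) i a⁻¹ • invWord e d g := by
  rw [invWord, mul_inv_rev, map_mul, mul_smul, ← Subgroup.coe_inv, he, invWord]

end Gate

theorem nonempty_bassSerreTree_of_mulEquiv [Nonempty ι] (he : ∀ i (a : A i), e a = of i a) :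
    Nonempty (BassSerreTree A C) := by
  classical
  obtain ⟨d⟩ := transversal_nonempty (fun i ↦ Subgroup.inclusion (hC i))
    fun i ↦ Subgroup.inclusion_injective (hC i)
  refine ⟨⟨fun g ↦ (invWord e d g).toList.length, invWordGate e d, hC, fun i g ↦ ?_,
    fun i g a ha ↦ ?_, fun i ↦ ?_, fun i g hi ↦ ?_, fun i j g hi hj ↦ ?_, fun g hg ↦ ?_⟩⟩
  · rw [inv_mul_invWordGate d he]
    exact Subtype.property _
  · rw [invWordGate, invWord_mul d he i g ⟨a, ha⟩, normalWordTail_smul, invWordGate]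
  · have hempty : invWord e d 1 = empty := by rw [invWord, inv_one, map_one, one_smul]
    rw [invWordGate, hempty, normalWordTail_empty, prod_empty, map_one, inv_one]
  · rw [invWord_invWordGate]
    exact length_normalWordTail_lt i _ ((inv_mul_invWordGate_notMem_iff d he i g).1 hi)
  · have hidx (i : ι) (hi : g⁻¹ * invWordGate e d i g ∉ C) : (invWord e d g).fstIdx = some i :=
      (fstIdx_eq_some_iff i _).2 ((inv_mul_invWordGate_notMem_iff d he i g).1 hi)
    exact Option.some_injective _ ((hidx i hi).symm.trans (hidx j hj))
  · cases hidx : (invWord e d g).fstIdx with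
    | some i =>
      exact ⟨i, (inv_mul_invWordGate_notMem_iff d he i g).2 ((fstIdx_eq_some_iff i _).1 hidx)⟩
    | none =>
      obtain ⟨i⟩ := ‹Nonempty ι›
      have hbase : e g⁻¹ = e ((invWord e d g).head : G) := by
        rw [← prod_invWord e d, prod_of_fstIdx_eq_none hidx,
          ← of_apply_eq_base (fun i ↦ Subgroup.inclusion (hC i)) i, ← he, Subgroup.coe_inclusion]
      exact absurd (inv_mem_iff.1 (e.injective hbase ▸ Subtype.property _)) hg

end Tree

end NormalWord

namespace IsAmalgamatedFreeProduct

open Monoid PushoutI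

variable {G : Type u} [Group G] {A₁ A₂ C : Subgroup G}

theorem le_cond (amal : IsAmalgamatedFreeProduct A₁ A₂ C) (b : Bool) : C ≤ cond b A₁ A₂ := by
  cases b
  exacts [amal.le_right, amal.le_left]

theorem exists_mulEquiv (amal : IsAmalgamatedFreeProduct A₁ A₂ C) :
    ∃ e : G ≃* PushoutI fun b ↦ Subgroup.inclusion (amal.le_cond b),
      ∀ b (a : (cond b A₁ A₂ : Subgroup G)), e a = of b a := by
  let φ (b : Bool) := Subgroup.inclusion (amal.le_cond b)
  obtain ⟨f, hf₁, hf₂⟩ := amal.univ (PushoutI φ) (of (φ := φ) true) (of (φ := φ) false)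
    fun c hc₁ hc₂ ↦ by
      have hc : c ∈ C := amal.inf_eq ▸ ⟨hc₁, hc₂⟩
      exact (of_apply_eq_base φ true ⟨c, hc⟩).trans (of_apply_eq_base φ false ⟨c, hc⟩).symm
  have hf : ∀ b (a : (cond b A₁ A₂ : Subgroup G)), f a = of (φ := φ) b a := by
    rintro (_ | _) a
    exacts [hf₂ a, hf₁ a]
  let k : PushoutI φ →* G := lift (fun b ↦ (cond b A₁ A₂).subtype) C.subtype fun _ ↦ rfl
  have hk (b : Bool) (a : (cond b A₁ A₂ : Subgroup G)) : k (of (φ := φ) b a) = a :=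
    lift_of (φ := φ) (fun b ↦ (cond b A₁ A₂).subtype) C.subtype (hf := fun _ ↦ rfl) a
  have hkf : k.comp f = MonoidHom.id G := by
    refine MonoidHom.eq_of_eqOn_dense (s := A₁ ∪ A₂) ?_ ?_
    · rw [Subgroup.closure_union, Subgroup.closure_eq, Subgroup.closure_eq, amal.sup_eq_top]
    · rintro a (ha | ha)
      exacts [(congrArg k (hf true ⟨a, ha⟩)).trans (hk true ⟨a, ha⟩),
        (congrArg k (hf false ⟨a, ha⟩)).trans (hk false ⟨a, ha⟩)]
  have hfk : f.comp k = MonoidHom.id _ := hom_ext_nonempty fun b ↦ by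
    ext a
    simp [hk, hf]
  exact ⟨MonoidHom.toMulEquiv f k hkf hfk, hf⟩

theorem nonempty_bassSerreTree (amal : IsAmalgamatedFreeProduct A₁ A₂ C) :
    Nonempty (BassSerreTree (fun b ↦ cond b A₁ A₂) C) := by
  obtain ⟨e, he⟩ := amal.exists_mulEquiv
  exact nonempty_bassSerreTree_of_mulEquiv e he

end IsAmalgamatedFreeProduct

/-! ### Subtrees -/

open scoped Pointwise

namespace BassSerreTree

variable {G ι : Type*} [Group G] {A : ι → Subgroup G} {C : Subgroup G}

section Subtree

variable (T : BassSerreTree A C)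

theorem inv_gate_mul_mem (i : ι) (g : G) : (T.gate i g)⁻¹ * g ∈ A i := by
  simpa using inv_mem (T.gate_mem i g)

theorem gate_eq_one_of_mem {i : ι} {g : G} (hg : g ∈ A i) : T.gate i g = 1 := by
  simpa only [one_mul, T.gate_one] using T.gate_mul i 1 g hg

theorem inv_mul_gate_mem_of_mem {c : G} (hc : c ∈ C) (i : ι) : c⁻¹ * T.gate i c ∈ C := by
  simpa only [T.gate_eq_one_of_mem (T.C_le i hc), mul_one] using inv_mem hc

theorem inv_mul_gate_mem_of_ne {i j : ι} (hij : j ≠ i) {g : G} (hg : g ∈ A i) :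
    g⁻¹ * T.gate j g ∈ C := by
  by_contra h
  have hi : g⁻¹ * T.gate i g ∈ C := by_contra fun hi ↦ hij (T.side_unique j i g h hi)
  rw [T.gate_eq_one_of_mem hg, mul_one, inv_mem_iff] at hi
  exact h (T.inv_mul_gate_mem_of_mem hi j)

theorem inv_mul_gate_mul_mem_iff {c : G} (hc : c ∈ C) (i : ι) (g : G) :
    (g * c)⁻¹ * T.gate i (g * c) ∈ C ↔ g⁻¹ * T.gate i g ∈ C := by
  rw [T.gate_mul i g c (T.C_le i hc), mul_inv_rev, mul_assoc,
    C.mul_mem_cancel_left (inv_mem hc)]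

/-- A set of edges containing the root and, with every edge, its gate towards the root. It need not
be closed under right multiplication by `C`. -/
structure IsRooted (M : Set G) : Prop where
  one_mem : 1 ∈ M
  gate_mem : ∀ g ∈ M, ∀ i, g⁻¹ * T.gate i g ∉ C → T.gate i g ∈ M

/-- A rooted set of edges which is a union of left cosets of `C`: the edge set of a subtree
containing the root. -/
structure IsSubtree (E : Set G) : Prop extends IsRooted T E where
  mul_mem : ∀ g ∈ E, ∀ c ∈ C, g * c ∈ E

variable {T}

namespace IsRooted

theorem induction_on [Nonempty ι] {M : Set G} (hM : T.IsRooted M) {p : G → Prop} (one : p 1)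
    (step : ∀ i, ∀ g ∈ M, ∀ a ∈ A i, g * a ∈ M → p g → p (g * a)) {m : G} (hm : m ∈ M) : p m := by
  induction hn : T.depth m using Nat.strong_induction_on generalizing m with
  | _ n ih =>
    by_cases hmC : m ∈ C
    · have hmA := T.C_le (Classical.arbitrary ι) hmC
      simpa using step _ 1 hM.one_mem m hmA (by simpa using hm) one
    · obtain ⟨i, hi⟩ := T.exists_side m hmC
      have hgate := hM.gate_mem m hm i hi
      simpa using step i _ hgate _ (T.inv_gate_mul_mem i m) (by simpa using hm)
        (ih _ (hn ▸ T.depth_gate_lt i m hi) hgate rfl)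

variable (T) in
theorem exists_finite_mem (g : G) : ∃ M : Set G, M.Finite ∧ T.IsRooted M ∧ g ∈ M := by
  induction hn : T.depth g using Nat.strong_induction_on generalizing g with
  | _ n ih =>
    by_cases hg : g ∈ C
    · refine ⟨{1, g}, Set.toFinite _, ⟨Set.mem_insert _ _, ?_⟩, by simp⟩
      rintro m (rfl | rfl) i hi
      exacts [absurd (T.inv_mul_gate_mem_of_mem C.one_mem i) hi,
        absurd (T.inv_mul_gate_mem_of_mem hg i) hi]
    · obtain ⟨i, hi⟩ := T.exists_side g hg
      obtain ⟨M, hM, hroot, hgM⟩ := ih _ (hn ▸ T.depth_gate_lt i g hi) _ rfl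
      refine ⟨insert g M, hM.insert g, ⟨Set.mem_insert_of_mem _ hroot.one_mem, ?_⟩,
        Set.mem_insert g M⟩
      rintro m (rfl | hm) j hj
      · rw [T.side_unique j i m hj hi]
        exact Set.mem_insert_of_mem _ hgM
      · exact Set.mem_insert_of_mem _ (hroot.gate_mem m hm j hj)

variable (T) in
theorem exists_finite_superset {F : Set G} (hF : F.Finite) :
    ∃ M : Set G, M.Finite ∧ T.IsRooted M ∧ F ⊆ M := by
  choose M hM hroot hmem using exists_finite_mem T
  refine ⟨⋃ g ∈ insert 1 F, M g, (hF.insert 1).biUnion fun g _ ↦ hM g, ⟨?_, ?_⟩, fun g hg ↦ ?_⟩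
  · exact Set.mem_biUnion (Set.mem_insert 1 F) (hmem 1)
  · intro m hm i hi
    obtain ⟨g, hg, hmg⟩ := Set.mem_iUnion₂.1 hm
    exact Set.mem_biUnion hg ((hroot g).gate_mem m hmg i hi)
  · exact Set.mem_biUnion (Set.mem_insert_of_mem 1 hg) (hmem g)

end IsRooted

variable (T) in
theorem isSubtree_edgeGroup : T.IsSubtree (C : Set G) where
  one_mem := one_mem C
  gate_mem _ hg i hi := absurd (T.inv_mul_gate_mem_of_mem hg i) hi
  mul_mem _ hg _ hc := mul_mem hg hc

variable (T) in
theorem isSubtree_vertexGroup (i : ι) : T.IsSubtree (A i : Set G) where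
  one_mem := one_mem (A i)
  gate_mem g hg j hj := by
    obtain rfl : j = i := by_contra fun hji ↦ hj (T.inv_mul_gate_mem_of_ne hji hg)
    rw [T.gate_eq_one_of_mem hg]
    exact one_mem (A j)
  mul_mem _ hg _ hc := mul_mem hg (T.C_le i hc)

namespace IsSubtree

variable {E : Set G} (hE : T.IsSubtree E)

include hE

theorem mul_mem_iff {g c : G} (hc : c ∈ C) : g * c ∈ E ↔ g ∈ E :=
  ⟨fun h ↦ by simpa using hE.mul_mem _ h _ (inv_mem hc), fun h ↦ hE.mul_mem g h c hc⟩

theorem mem_iff_of_inv_mul_mem {x y : G} (h : x⁻¹ * y ∈ C) : y ∈ E ↔ x ∈ E := by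
  rw [← hE.mul_mem_iff (g := x) h, mul_inv_cancel_left]

theorem notMem_edgeGroup {g : G} (hg : g ∉ E) : g ∉ C :=
  fun h ↦ hg (by simpa using hE.mul_mem 1 hE.one_mem g h)

theorem gate_mem_of_mem {g : G} (hg : g ∈ E) (i : ι) : T.gate i g ∈ E := by
  by_cases hi : g⁻¹ * T.gate i g ∈ C
  · rwa [hE.mem_iff_of_inv_mul_mem hi]
  · exact hE.gate_mem g hg i hi

theorem union_coset {i : ι} {g a : G} (hg : g ∈ E) (ha : a ∈ A i) :
    T.IsSubtree (E ∪ {x | (g * a)⁻¹ * x ∈ C}) := by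
  refine ⟨⟨Or.inl hE.one_mem, ?_⟩, ?_⟩
  · rintro x (hx | hx) j hj
    · exact Or.inl (hE.gate_mem x hx j hj)
    have hgate : T.gate i x ∈ E := by
      have hx' := T.gate_mul i (g * a) _ (T.C_le i hx)
      rw [mul_inv_cancel_left, T.gate_mul i g a ha] at hx'
      exact hx' ▸ hE.gate_mem_of_mem hg i
    by_cases hi : x⁻¹ * T.gate i x ∈ C
    · exact Or.inl (hE.gate_mem x ((hE.mem_iff_of_inv_mul_mem hi).1 hgate) j hj)
    · exact Or.inl (T.side_unique j i x hj hi ▸ hgate)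
  · rintro x (hx | hx) c hc
    · exact Or.inl (hE.mul_mem x hx c hc)
    · exact Or.inr (by simpa only [Set.mem_ofPred_eq, mul_assoc] using C.mul_mem hx hc)

end IsSubtree

end Subtree

section Exit

variable [Nonempty ι] (T : BassSerreTree A C)

open Classical in
/-- The vertex at which the path from the subtree `E` to the edge `g C` leaves `E`; the pair
`(i, u)` stands for the vertex `u A i`. The value is junk if `g ∈ E`. -/
noncomputable def exitVertex (E : Set G) (g : G) : ι × G :=
  if h : ∃ i, g⁻¹ * T.gate i g ∉ C then
    if T.gate h.choose g ∈ E then (h.choose, T.gate h.choose g)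
    else exitVertex E (T.gate h.choose g)
  else (Classical.arbitrary ι, 1)
termination_by T.depth g
decreasing_by exact T.depth_gate_lt _ _ h.choose_spec

variable {T}

open Classical in
theorem exitVertex_eq_ite (E : Set G) {i : ι} {g : G} (hi : g⁻¹ * T.gate i g ∉ C) :
    T.exitVertex E g =
      if T.gate i g ∈ E then (i, T.gate i g) else T.exitVertex E (T.gate i g) := by
  have h : ∃ i, g⁻¹ * T.gate i g ∉ C := ⟨i, hi⟩
  rw [exitVertex, dif_pos h, T.side_unique _ _ g h.choose_spec hi]

namespace IsSubtree

variable {E : Set G} (hE : T.IsSubtree E)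

include hE

theorem exitVertex_of_gate_mem {i : ι} {g : G} (hi : T.gate i g ∈ E) (hg : g ∉ E) :
    T.exitVertex E g = (i, T.gate i g) := by
  rw [exitVertex_eq_ite E fun h ↦ hg ((hE.mem_iff_of_inv_mul_mem h).1 hi), if_pos hi]

theorem exitVertex_mul_of_mem_edgeGroup {g : G} (hg : g ∉ E) {c : G} (hc : c ∈ C) :
    T.exitVertex E (g * c) = T.exitVertex E g := by
  obtain ⟨i, hi⟩ := T.exists_side g (hE.notMem_edgeGroup hg)
  rw [exitVertex_eq_ite E hi, exitVertex_eq_ite E (mt (T.inv_mul_gate_mul_mem_iff hc i g).1 hi),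
    T.gate_mul i g c (T.C_le i hc)]

theorem exitVertex_gate {i : ι} {g : G} (hi : T.gate i g ∉ E) :
    T.exitVertex E (T.gate i g) = T.exitVertex E g := by
  by_cases hg : g⁻¹ * T.gate i g ∈ C
  · simpa using hE.exitVertex_mul_of_mem_edgeGroup
      (mt (hE.mem_iff_of_inv_mul_mem hg).2 hi) hg
  · rw [exitVertex_eq_ite E hg, if_neg hi]

theorem exitVertex_mul {i : ι} {g a : G} (hi : T.gate i g ∉ E) (ha : a ∈ A i) :
    T.exitVertex E (g * a) = T.exitVertex E g := by
  have hga := T.gate_mul i g a ha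
  rw [← hE.exitVertex_gate hi, ← hga, hE.exitVertex_gate (hga.symm ▸ hi)]

theorem exitVertex_mem {g : G} (hg : g ∉ E) : (T.exitVertex E g).2 ∈ E := by
  induction hn : T.depth g using Nat.strong_induction_on generalizing g with
  | _ n ih =>
    obtain ⟨i, hi⟩ := T.exists_side g (hE.notMem_edgeGroup hg)
    rw [exitVertex_eq_ite E hi]
    split_ifs with hgate
    · exact hgate
    · exact ih _ (hn ▸ T.depth_gate_lt i g hi) hgate rfl

end IsSubtree

variable (T)

open Classical in
/-- The first edge at the vertex `A i` on the path from this vertex to the edge `g C`. -/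
noncomputable def firstEdge (i : ι) (g : G) : G ⧸ C :=
  if g ∈ A i then g else (T.exitVertex (A i) g).2

theorem firstEdge_of_mem {i : ι} {g : G} (hg : g ∈ A i) : T.firstEdge i g = g := if_pos hg

theorem exists_firstEdge_eq (i : ι) (g : G) : ∃ a ∈ A i, T.firstEdge i g = a := by
  by_cases hg : g ∈ A i
  · exact ⟨g, hg, T.firstEdge_of_mem hg⟩
  · exact ⟨_, (T.isSubtree_vertexGroup i).exitVertex_mem hg, if_neg hg⟩

theorem firstEdge_mul (i : ι) {j : ι} (g : G) {a : G} (ha : a ∈ A j) :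
    T.firstEdge i (g * a) = T.firstEdge i g ∨ j = i ∧ g ∈ A i := by
  have hE := T.isSubtree_vertexGroup i
  have hgate := T.gate_mul j g a ha
  by_cases hj : T.gate j g ∈ A i
  · obtain rfl | hji := eq_or_ne j i
    · exact Or.inr ⟨rfl, by simpa using mul_mem hj (T.inv_gate_mul_mem j g)⟩
    have hfirst (y : G) (hy : T.gate j y ∈ A i) : T.firstEdge i y = T.gate j y := by
      by_cases hyi : y ∈ A i
      · rw [T.firstEdge_of_mem hyi, QuotientGroup.eq]
        exact T.inv_mul_gate_mem_of_ne hji hyi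
      · rw [firstEdge, if_neg hyi, hE.exitVertex_of_gate_mem hy hyi]
    left
    rw [hfirst _ (hgate ▸ hj), hfirst g hj, hgate]
  · have hnot (y : G) (hy : T.gate j y ∉ A i) : y ∉ A i :=
      fun hyi ↦ hy (hE.gate_mem_of_mem hyi j)
    left
    rw [firstEdge, firstEdge, if_neg (hnot _ (hgate ▸ hj)), if_neg (hnot g hj),
      hE.exitVertex_mul hj ha]

end Exit

/-- A finite rooted set of edges `M` such that `H` is generated by its elements in `M`. Then the
translates `h M` with `h ∈ H` cover an `H`-invariant subtree. -/
structure IsFundamentalTree (T : BassSerreTree A C) (H : Subgroup G) (M : Set G) : Prop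
    extends IsRooted T M where
  finite : M.Finite
  le_closure : H.toSubmonoid ≤ Submonoid.closure (H ∩ M)

namespace IsFundamentalTree

variable {T : BassSerreTree A C} {H : Subgroup G} {M : Set G}

variable (T) in
theorem exists_of_fg (hH : H.FG) : ∃ M, T.IsFundamentalTree H M := by
  obtain ⟨S, rfl⟩ := hH
  have hS : (S ∪ (S : Set G)⁻¹ : Set G).Finite := S.finite_toSet.union S.finite_toSet.inv
  obtain ⟨M, hM, hroot, hSM⟩ := IsRooted.exists_finite_superset T hS
  refine ⟨M, hroot, hM, ?_⟩
  rw [Subgroup.closure_toSubmonoid]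
  refine Submonoid.closure_mono (Set.subset_inter ?_ hSM)
  exact Set.union_subset Subgroup.subset_closure
    fun x hx ↦ by simpa using inv_mem (Subgroup.subset_closure (Set.mem_inv.1 hx))

theorem induction_on [Nonempty ι] (hM : T.IsFundamentalTree H M) {p : G → Prop} (one : p 1)
    (step : ∀ i, ∀ h ∈ H, ∀ m ∈ M, ∀ a ∈ A i, m * a ∈ M → p (h * m) → p (h * (m * a)))
    {h m : G} (hh : h ∈ H) (hm : m ∈ M) : p (h * m) := by
  have hmul (h : G) (hh : h ∈ H) (hp : p h) (m : G) (hm : m ∈ M) : p (h * m) :=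
    hM.toIsRooted.induction_on (p := fun m ↦ p (h * m)) (by rwa [mul_one])
      (fun i m hm a ha ↦ step i h hh m hm a ha) hm
  refine hmul h hh ?_ m hm
  have hclosure := hM.le_closure hh
  clear hh
  induction hclosure using Submonoid.closure_induction_right with
  | one => exact one
  | mul_right x hx y hy hp =>
    have hxH : x ∈ H.toSubmonoid :=
      Submonoid.closure_le.2 Set.inter_subset_left hx
    exact hmul x hxH hp y hy.2

theorem isSubtree [Nonempty ι] (hM : T.IsFundamentalTree H M) :
    T.IsSubtree (H * M * C : Set G) := by
  have hC {x : G} (hx : x ∈ (H * M * C : Set G)) {c : G} (hc : c ∈ C) :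
      x * c ∈ (H * M * C : Set G) := by
    obtain ⟨y, hy, b, hb, rfl⟩ := hx
    exact ⟨y, hy, b * c, C.mul_mem hb hc, (mul_assoc _ _ _).symm⟩
  have hHM {x m : G} (hx : x ∈ H) (hm : m ∈ M) : x * m ∈ (H * M * C : Set G) :=
    ⟨_, ⟨x, hx, m, hm, rfl⟩, 1, C.one_mem, mul_one _⟩
  have hpath {x m : G} (hx : x ∈ H) (hm : m ∈ M) :
      ∃ E ⊆ (H * M * C : Set G), T.IsSubtree E ∧ x * m ∈ E := by
    refine hM.induction_on (p := fun g ↦ ∃ E ⊆ (H * M * C : Set G), T.IsSubtree E ∧ g ∈ E)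
      ⟨C, fun c hc ↦ ?_, T.isSubtree_edgeGroup, C.one_mem⟩ ?_ hx hm
    · simpa using hC (hHM H.one_mem hM.one_mem) hc
    · rintro i x hx m _ a ha hma ⟨E, hEM, hE, hxm⟩
      refine ⟨_, Set.union_subset hEM fun y hy ↦ ?_, hE.union_coset hxm ha, Or.inr ?_⟩
      · simpa [mul_assoc] using hC (hHM hx hma) hy
      · simp [mul_assoc, C.one_mem]
  have hsubtree {g : G} (hg : g ∈ (H * M * C : Set G)) :
      ∃ E ⊆ (H * M * C : Set G), T.IsSubtree E ∧ g ∈ E := by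
    obtain ⟨_, ⟨x, hx, m, hm, rfl⟩, c, hc, rfl⟩ := hg
    obtain ⟨E, hEM, hE, hxm⟩ := hpath hx hm
    exact ⟨E, hEM, hE, hE.mul_mem _ hxm c hc⟩
  refine ⟨⟨by simpa using hHM H.one_mem hM.one_mem, fun g hg i _ ↦ ?_⟩, fun g hg c hc ↦ hC hg hc⟩
  obtain ⟨E, hEM, hE, hgE⟩ := hsubtree hg
  exact hEM (hE.gate_mem_of_mem hgE i)

end IsFundamentalTree

end BassSerreTree

section FinitelyGenerated

variable {G : Type*} [Group G]

theorem fg_map {Γ : Type*} [Group Γ] {H : Subgroup G} (hH : H.FG) (f : G →* Γ) :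
    (H.map f).FG := by
  rw [Subgroup.fg_iff_submonoid_fg] at hH ⊢
  exact hH.map f

theorem exists_fg_of_inv_mul_mul_mem {L C : Subgroup G} (hC : ∀ D ≤ C, D.FG) (n n' : G) :
    ∃ P ≤ L, P.FG ∧ ∀ l ∈ L, (l * n)⁻¹ * n' ∈ C → l ∈ P := by
  by_cases hl₀ : ∃ l₀ ∈ L, (l₀ * n)⁻¹ * n' ∈ C
  · obtain ⟨l₀, hl₀, hl₀C⟩ := hl₀
    let f := (MulAut.conj n).toMonoidHom
    refine ⟨Subgroup.zpowers l₀ ⊔ (L.comap f ⊓ C).map f, ?_, ?_, fun l hl hlC ↦ ?_⟩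
    · rw [sup_le_iff, Subgroup.zpowers_le, Subgroup.map_le_iff_le_comap]
      exact ⟨hl₀, inf_le_left⟩
    · exact .sup ⟨{l₀}, by rw [Finset.coe_singleton, Subgroup.zpowers_eq_closure]⟩
        (fg_map (hC _ inf_le_right) f)
    · have hf : f (((l₀ * n)⁻¹ * n') * ((l * n)⁻¹ * n')⁻¹) = l₀⁻¹ * l := by
        simp only [f, MulEquiv.coe_toMonoidHom, MulAut.conj_apply]
        group
      have hmem : l₀⁻¹ * l ∈ (L.comap f ⊓ C).map f := by
        refine ⟨_, ⟨?_, C.mul_mem hl₀C (inv_mem hlC)⟩, hf⟩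
        exact (hf ▸ mul_mem (inv_mem hl₀) hl : f _ ∈ L)
      simpa using mul_mem (Subgroup.mem_sup_left (Subgroup.mem_zpowers l₀))
        (Subgroup.mem_sup_right hmem)
  · exact ⟨⊥, bot_le, hC ⊥ bot_le, fun l hl hlC ↦ absurd ⟨l, hl, hlC⟩ hl₀⟩

theorem exists_fg_of_finite {L C : Subgroup G} (hC : ∀ D ≤ C, D.FG) {N : Set G} (hN : N.Finite) :
    ∃ P ≤ L, P.FG ∧ ∀ n ∈ N, ∀ n' ∈ N, ∀ l ∈ L, (l * n)⁻¹ * n' ∈ C → l ∈ P := by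
  choose P hPL hP hmem using exists_fg_of_inv_mul_mul_mem (L := L) hC
  have := hN.to_subtype
  exact ⟨⨆ n : N, ⨆ n' : N, P n n', iSup₂_le fun n n' ↦ hPL n n',
    .iSup _ fun n ↦ .iSup _ fun n' ↦ hP n n',
    fun n hn n' hn' l hl hlC ↦ Subgroup.mem_iSup_of_mem ⟨n, hn⟩
      (Subgroup.mem_iSup_of_mem ⟨n', hn'⟩ (hmem n n' l hl hlC))⟩

theorem exists_finite_forall_mul_mem {H L : Subgroup G} {M : Set G} (hM : M.Finite) :
    ∃ R : Set G, R.Finite ∧ R ⊆ H ∧ 1 ∈ R ∧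
      ∀ h ∈ H, ∀ m ∈ M, h * m ∈ L → ∃ r ∈ R, r * m ∈ L := by
  have hr (m : G) : ∃ r ∈ H, ∀ h ∈ H, h * m ∈ L → r * m ∈ L := by
    by_cases hm : ∃ r ∈ H, r * m ∈ L
    · exact hm.imp fun r hr ↦ ⟨hr.1, fun _ _ _ ↦ hr.2⟩
    · exact ⟨1, one_mem H, fun h hh hhm ↦ absurd ⟨h, hh, hhm⟩ hm⟩
  choose r hrH hr using hr
  refine ⟨insert 1 (r '' M), (hM.image r).insert 1, ?_, Set.mem_insert _ _, fun h hh m hm hhm ↦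
    ⟨r m, Set.mem_insert_of_mem _ ⟨m, hm, rfl⟩, hr m h hh hhm⟩⟩
  rintro _ (rfl | ⟨m, -, rfl⟩)
  exacts [one_mem H, hrH m]

theorem exists_fg_le_inf {H L C : Subgroup G} (hC : ∀ D ≤ C, D.FG) {M : Set G} (hM : M.Finite)
    (h1 : 1 ∈ M) : ∃ P ≤ H ⊓ L, P.FG ∧ ∃ N : Set G, 1 ∈ N ∧
      (∀ n ∈ N, ∀ n' ∈ N, ∀ l ∈ H ⊓ L, (l * n)⁻¹ * n' ∈ C → l ∈ P) ∧
      ∀ h ∈ H, ∀ m ∈ M, ∀ m' ∈ M, h * m ∈ L → h * m' ∈ L →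
        ∃ l ∈ H ⊓ L, ∃ l' ∈ H ⊓ L, l⁻¹ * l' ∈ P ∧
          (∃ n ∈ N, l * n = h * m) ∧ ∃ n' ∈ N, l' * n' = h * m' := by
  obtain ⟨R, hR, hRH, hR1, hRM⟩ := exists_finite_forall_mul_mem (H := H) (L := L) hM
  obtain ⟨P, hPL, hP, hmem⟩ := exists_fg_of_finite (L := H ⊓ L) hC (hR.mul hM)
  refine ⟨P, hPL, hP, R * M, ⟨1, hR1, 1, h1, mul_one 1⟩, hmem, ?_⟩
  have hmemL {h r m : G} (hh : h ∈ H) (hr : r ∈ R) (hm : h * m ∈ L) (hrm : r * m ∈ L) :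
      h * r⁻¹ ∈ H ⊓ L :=
    ⟨H.mul_mem hh (H.inv_mem (hRH hr)),
      by simpa [mul_assoc] using L.mul_mem hm (L.inv_mem hrm)⟩
  intro h hh m hm m' hm' hhm hhm'
  obtain ⟨r, hr, hrm⟩ := hRM h hh m hm hhm
  obtain ⟨r', hr', hrm'⟩ := hRM h hh m' hm' hhm'
  have hl := hmemL hh hr hhm hrm
  have hl' := hmemL hh hr' hhm' hrm'
  refine ⟨_, hl, _, hl', ?_, ⟨r * m, ⟨r, hr, m, hm, rfl⟩, by group⟩,
    ⟨r' * m', ⟨r', hr', m', hm', rfl⟩, by group⟩⟩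
  exact hmem r' ⟨r', hr', 1, h1, mul_one r'⟩ r ⟨r, hr, 1, h1, mul_one r⟩ _
    (mul_mem (inv_mem hl) hl') (by simp)

end FinitelyGenerated

namespace BassSerreTree

variable {G ι : Type*} [Group G] {A : ι → Subgroup G} {C : Subgroup G}

theorem fg_inf_vertexGroup (T : BassSerreTree A C) (hC : ∀ D ≤ C, D.FG) {H : Subgroup G}
    (hH : H.FG) (i : ι) : (H ⊓ A i).FG := by
  have : Nonempty ι := ⟨i⟩
  obtain ⟨M, hM⟩ := IsFundamentalTree.exists_of_fg T hH
  obtain ⟨P, hPL, hP, N, hN1, hN, hstep⟩ :=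
    exists_fg_le_inf (H := H) (L := A i) hC hM.finite hM.one_mem
  -- The projection to the star of `A i` of a path in `H M` starting at the root stays in `P N C`.
  let Q (g : G) : Prop := ∃ p ∈ P, ∃ n ∈ N, T.firstEdge i g = (p * n : G)
  have hQ {g l n : G} (hg : g ∈ A i) (hl : l ∈ H ⊓ A i) (hn : n ∈ N) (hln : l * n = g) :
      Q g ↔ l ∈ P := by
    constructor
    · rintro ⟨p, hp, n', hn', heq⟩
      rw [T.firstEdge_of_mem hg, QuotientGroup.eq, ← hln] at heq
      rw [← P.mul_mem_cancel_left (inv_mem hp)]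
      refine hN n hn n' hn' _ (mul_mem (inv_mem (hPL hp)) hl) ?_
      simpa [mul_assoc] using heq
    · exact fun hlP ↦ ⟨l, hlP, n, hn, by rw [hln, T.firstEdge_of_mem hg]⟩
  have hone : Q 1 := (hQ (one_mem _) (one_mem _) hN1 (mul_one 1)).2 (one_mem P)
  have hall (h : G) (hh : h ∈ H) : Q (h * 1) := by
    refine hM.induction_on hone (fun j h hh m hm a ha hma hQm ↦ ?_) hh hM.one_mem
    obtain heq | ⟨rfl, hhm⟩ := T.firstEdge_mul i (h * m) ha
    · simpa only [Q, ← mul_assoc, heq] using hQm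
    have hhma : h * (m * a) ∈ A j := mul_assoc h m a ▸ mul_mem hhm ha
    obtain ⟨l, hl, l', hl', hll', ⟨n, hn, hln⟩, n', hn', hln'⟩ :=
      hstep h hh m hm _ hma hhm hhma
    rw [hQ hhm hl hn hln] at hQm
    rwa [hQ hhma hl' hn' hln', ← P.mul_mem_cancel_left (inv_mem hQm)]
  have heq : H ⊓ A i = P := le_antisymm
    (fun l hl ↦ (hQ hl.2 hl hN1 (mul_one l)).1 (mul_one l ▸ hall l hl.1)) hPL
  rwa [heq]

variable [PseudoMetricSpace G] [IsIsometricSMul G G] {δ : ℝ}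

theorem exists_isQuasiconvexSet_firstEdge [Nonempty ι] (T : BassSerreTree A C)
    (h : IsProperHyperbolic G δ) (hC : IsVirtuallyCyclic C) (i : ι) :
    ∃ K, ∀ g, IsQuasiconvexSet K (QuotientGroup.mk ⁻¹' {T.firstEdge i g} : Set G) := by
  obtain ⟨K, hK⟩ := h.exists_isQuasiconvexSet_of_isVirtuallyCyclic hC
  refine ⟨K, fun g ↦ ?_⟩
  obtain ⟨a, -, ha⟩ := T.exists_firstEdge_eq i g
  convert hK.preimage_mul_left a⁻¹ using 1
  ext y
  rw [Set.mem_preimage, Set.mem_singleton_iff, ha, eq_comm, QuotientGroup.eq]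
  rfl

/-- The retraction maps `g` to a nearest point of the first edge on the path from the vertex
`A i` to `g C`. -/
theorem isQuasiconvex_vertexGroup (T : BassSerreTree A C) (h : IsProperHyperbolic G δ)
    (hC : IsVirtuallyCyclic C) (hgen : ⨆ i, A i = ⊤) (i : ι) : IsQuasiconvex (A i) := by
  have : Nonempty ι := ⟨i⟩
  have hG : (⊤ : Subgroup G).FG :=
    ⟨(h.finite_closedBall 1).toFinset, by simpa using h.isSymmGen_closedBall.2.2⟩
  have hA : (A i).FG := by
    simpa using T.fg_inf_vertexGroup (fun D ↦ fg_of_le_of_isVirtuallyCyclic hC) hG i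
  obtain ⟨K, hK⟩ := T.exists_isQuasiconvexSet_firstEdge h hC i
  have hr (g : G) : ∃ r : A i, IsNearest (QuotientGroup.mk ⁻¹' {T.firstEdge i g} : Set G) g r := by
    obtain ⟨a, ha, hga⟩ := T.exists_firstEdge_eq i g
    obtain ⟨r, hr⟩ :=
      h.exists_isNearest (S := QuotientGroup.mk ⁻¹' {T.firstEdge i g}) ⟨a, hga.symm⟩ g
    have har : a⁻¹ * r ∈ C := QuotientGroup.eq.1 (hga.symm.trans hr.1.symm)
    exact ⟨⟨r, by simpa using mul_mem ha (T.C_le i har)⟩, hr⟩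
  choose r hr using hr
  have hself (g : G) (hg : g ∈ A i) : dist (r g : G) g ≤ 0 := by
    simpa [dist_comm] using (hr g).2 g (T.firstEdge_of_mem hg).symm
  refine h.isQuasiconvex_of_retraction hA (K := 0) (fun p ↦ hself p p.2) ?_
  refine exists_dist_apply_mul_le (S := ⋃ j, A j) (by rwa [← Subgroup.iSup_eq_closure]) ?_
  intro x hx
  obtain ⟨j, hj⟩ := Set.mem_iUnion.1 hx
  refine ⟨dist 1 x + (4 * (K + δ + 1) + 2 * δ), fun g ↦ ?_⟩
  have hgx := dist_self_mul g x
  obtain heq | ⟨rfl, hg⟩ := T.firstEdge_mul i g hj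
  · rw [← hgx]
    exact h.dist_le_of_isNearest (hK g) (hr g) (heq ▸ hr (g * x))
  · have := h.delta_nonneg
    have := (hK g).nonneg ⟨_, (hr g).1⟩
    have := dist_triangle4_right (r g : G) (r (g * x)) g (g * x)
    linarith [hself g hg, hself _ (mul_mem hg hj)]

end BassSerreTree

/-! ### Quasiconvexity of stabilizers -/

section Stabilizers

variable {G : Type u} [Group G]

theorem mem_conj_smul_iff {L : Subgroup G} {g x : G} :
    x ∈ MulAut.conj g • L ↔ g⁻¹ * x * g ∈ L := by
  rw [Subgroup.mem_pointwise_smul_iff_inv_smul_mem, MulAut.smul_def, MulAut.conj_inv_apply]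

theorem IsVirtuallyCyclic.conj_smul {C : Subgroup G} (hC : IsVirtuallyCyclic C) (g : G) :
    IsVirtuallyCyclic (MulAut.conj g • C : Subgroup G) :=
  hC.of_injective (f := (Subgroup.equivSMul (MulAut.conj g) C).symm.toMonoidHom)
    (Subgroup.equivSMul (MulAut.conj g) C).symm.injective

variable [PseudoMetricSpace G] [IsIsometricSMul G G] {δ : ℝ}

theorem IsQuasiconvexSet.conj_smul {K : ℝ} {L : Subgroup G} (hL : IsQuasiconvexSet K (L : Set G))
    (g : G) : IsQuasiconvexSet (K + 3 * dist 1 g) ((MulAut.conj g • L : Subgroup G) : Set G) := by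
  refine (hL.preimage_mul_left g⁻¹).of_hausdorff (fun x hx ↦ ?_) fun x hx ↦ ?_
  · refine ⟨x * g, ?_, (dist_self_mul x g).le⟩
    simpa [← mul_assoc] using mem_conj_smul_iff.1 hx
  · refine ⟨x * g⁻¹, mem_conj_smul_iff.2 (by simpa [mul_assoc] using hx), ?_⟩
    rw [dist_self_mul, dist_one_inv]

theorem IsProperHyperbolic.exists_isQuasiconvexSet_of_le (h : IsProperHyperbolic G δ)
    {A L : Subgroup G} (hA : IsQuasiconvex A) (hQ : HasPropertyQ A) (hL : L.FG) (hLA : L ≤ A) :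
    ∃ K, IsQuasiconvexSet K (L : Set G) := by
  have hfg : (L.subgroupOf A).FG := by
    rw [← Group.fg_iff_subgroup_fg] at hL ⊢
    exact Group.fg_of_surjective (f := (Subgroup.subgroupOfEquivOfLe hLA).symm.toMonoidHom)
      (Subgroup.subgroupOfEquivOfLe hLA).symm.surjective
  have hrange : Set.range (A.subtype.comp (L.subgroupOf A).subtype) = L := by
    rw [← MonoidHom.coe_range, MonoidHom.range_comp, Subgroup.range_subtype,
      Subgroup.subgroupOf_map_subtype, inf_eq_left.2 hLA]
  rw [← hrange]
  exact ((h.isUndistorted_subtype hA).comp_subtype (hQ _ hfg)).exists_isQuasiconvexSet_range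
    h.toIsDiscreteHyperbolic

theorem BassSerreTree.exists_isQuasiconvexSet_inf_conj_smul {ι : Type*} {A : ι → Subgroup G}
    {C : Subgroup G} (T : BassSerreTree A C) (h : IsProperHyperbolic G δ)
    (hC : IsVirtuallyCyclic C) {i : ι} (hA : IsQuasiconvex (A i)) (hQ : HasPropertyQ (A i))
    {H : Subgroup G} (hH : H.FG) (g : G) :
    ∃ K, IsQuasiconvexSet K ((H ⊓ MulAut.conj g • A i : Subgroup G) : Set G) := by
  have hfg : (MulAut.conj g⁻¹ • H ⊓ A i).FG :=
    T.fg_inf_vertexGroup (fun D ↦ fg_of_le_of_isVirtuallyCyclic hC) (fg_map hH _) i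
  obtain ⟨K, hK⟩ := h.exists_isQuasiconvexSet_of_le hA hQ hfg inf_le_right
  have hconj : MulAut.conj g • (MulAut.conj g⁻¹ • H ⊓ A i) = H ⊓ MulAut.conj g • A i := by
    rw [Subgroup.smul_inf, map_inv, smul_inv_smul]
  exact ⟨_, hconj ▸ hK.conj_smul g⟩

end Stabilizers

/-! ### Transporters -/

section Transporter

theorem exists_forall_of_finite {β : Type*} {M : Set β} (hM : M.Finite) {p : β → ℝ → Prop}
    (h : ∀ m ∈ M, ∃ K, p m K) (hp : ∀ m, Monotone (p m)) : ∃ K, ∀ m ∈ M, p m K :=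
  ((Filter.eventually_all_finite hM).2 fun m hm ↦ (h m hm).elim fun K hK ↦
    Filter.eventually_atTop.2 ⟨K, fun _ hKK' ↦ hp m hKK' hK⟩).exists

variable {G : Type*} [Group G] {H L : Subgroup G} {M : Set G} {u : G}

/-- The elements of `H` which carry an edge in `M` to an edge at the vertex `u L`. -/
def transporter (H : Subgroup G) (M : Set G) (L : Subgroup G) (u : G) : Set G :=
  {x | x ∈ H ∧ ∃ m ∈ M, u⁻¹ * (x * m) ∈ L}

theorem transporter_subset : transporter H M L u ⊆ H := fun _ hx ↦ hx.1

theorem transporter_mul {a : G} (ha : a ∈ L) :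
    transporter H M L (u * a) = transporter H M L u := by
  simp only [transporter, mul_inv_rev, mul_assoc, L.mul_mem_cancel_left (inv_mem ha)]

theorem preimage_mul_left_transporter {x : G} (hx : x ∈ H) :
    (x * ·) ⁻¹' transporter H M L u = transporter H M L (x⁻¹ * u) := by
  ext y
  simp only [transporter, Set.mem_preimage, Set.mem_ofPred_eq, H.mul_mem_cancel_left hx,
    mul_inv_rev, inv_inv, mul_assoc]

theorem self_mem_transporter {x : G} (hx : x ∈ H) (h1 : 1 ∈ M) : x ∈ transporter H M L x :=
  ⟨hx, 1, h1, by simp⟩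

theorem transporter_nonempty (hu : u ∈ (H * M * L : Set G)) : (transporter H M L u).Nonempty := by
  obtain ⟨_, ⟨x, hx, m, hm, rfl⟩, a, ha, rfl⟩ := hu
  exact ⟨x, hx, m, hm, by simpa [mul_assoc] using ha⟩

theorem mul_mem_transporter {x y : G} (hx : x ∈ H ⊓ MulAut.conj u • L)
    (hy : y ∈ transporter H M L u) : x * y ∈ transporter H M L u := by
  have hu : x⁻¹ * u = u * (u⁻¹ * x * u)⁻¹ := by group
  rw [← Set.mem_preimage (f := (x * ·)), preimage_mul_left_transporter hx.1, hu,
    transporter_mul (inv_mem (mem_conj_smul_iff.1 hx.2))]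
  exact hy

variable [PseudoMetricSpace G] [IsIsometricSMul G G]

theorem IsNearest.transporter_inv_mul {x y p : G} (hx : x ∈ H)
    (hp : IsNearest (transporter H M L y) y p) :
    IsNearest (transporter H M L (x⁻¹ * y)) (x⁻¹ * y) (x⁻¹ * p) :=
  preimage_mul_left_transporter (M := M) (L := L) hx ▸ hp.preimage_mul_left x

theorem exists_isQuasiconvexSet_transporter_of_mem (hM : M.Finite) {m : G} (hm : m ∈ M) {K : ℝ}
    (hK : IsQuasiconvexSet K ((H ⊓ MulAut.conj m • L : Subgroup G) : Set G)) :
    ∃ K, IsQuasiconvexSet K (transporter H M L m) := by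
  have hy (n : G) : ∃ y, ∀ x ∈ H, m⁻¹ * (x * n) ∈ L → x * y⁻¹ ∈ H ⊓ MulAut.conj m • L := by
    by_cases hn : ∃ y ∈ H, m⁻¹ * (y * n) ∈ L
    · obtain ⟨y, hy, hyn⟩ := hn
      refine ⟨y, fun x hx hxn ↦ ⟨H.mul_mem hx (H.inv_mem hy), mem_conj_smul_iff.2 ?_⟩⟩
      simpa [mul_assoc] using mul_mem hxn (inv_mem hyn)
    · exact ⟨1, fun x hx hxn ↦ absurd ⟨x, hx, hxn⟩ hn⟩
  choose y hy using hy
  obtain ⟨R, hR, hyR⟩ := exists_dist_one_le (hM.image y)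
  refine ⟨_, hK.of_hausdorff (R := R) ?_ ?_⟩
  · rintro x ⟨hx, n, hn, hxn⟩
    refine ⟨_, hy n x hx hxn, ?_⟩
    rw [dist_self_mul, dist_one_inv]
    exact hyR _ ⟨n, hn, rfl⟩
  · rintro x ⟨hx, hxL⟩
    refine ⟨x, ⟨hx, m, hm, ?_⟩, by rwa [dist_self]⟩
    rw [← mul_assoc]
    exact mem_conj_smul_iff.1 hxL

theorem exists_isQuasiconvexSet_transporter (hM : M.Finite)
    (hK : ∀ g : G, ∃ K, IsQuasiconvexSet K ((H ⊓ MulAut.conj g • L : Subgroup G) : Set G)) :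
    ∃ K, ∀ u ∈ (H * M * L : Set G), IsQuasiconvexSet K (transporter H M L u) := by
  obtain ⟨K, hK⟩ := exists_forall_of_finite hM (fun m hm ↦ (hK m).elim fun _ ↦
    exists_isQuasiconvexSet_transporter_of_mem hM hm) fun _ _ _ hKK' h ↦ h.mono hKK'
  refine ⟨K, ?_⟩
  rintro _ ⟨_, ⟨x, hx, m, hm, rfl⟩, a, ha, rfl⟩
  convert (hK m hm).preimage_mul_left x⁻¹ using 1
  rw [preimage_mul_left_transporter (inv_mem hx), inv_inv]
  exact transporter_mul ha

end Transporter

section Projection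

variable {G : Type*} [Group G] {C H : Subgroup G} {S : Set G}

theorem finite_inter_mul (hCH : ((H ⊓ C : Subgroup G) : Set G).Finite) {B : Set G}
    (hB : B.Finite) : ((H : Set G) ∩ (C * B)).Finite := by
  have hb (b : G) : {x | x ∈ H ∧ x * b⁻¹ ∈ C}.Finite := by
    obtain hempty | ⟨y, hy, hyb⟩ := {x | x ∈ H ∧ x * b⁻¹ ∈ C}.eq_empty_or_nonempty
    · exact hempty ▸ Set.finite_empty
    · refine (hCH.image (· * y)).subset fun x ⟨hx, hxb⟩ ↦
        ⟨x * y⁻¹, ⟨H.mul_mem hx (H.inv_mem hy), ?_⟩, by simp⟩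
      simpa [mul_assoc] using C.mul_mem hxb (C.inv_mem hyb)
  refine (hB.biUnion fun b _ ↦ hb b).subset ?_
  rintro _ ⟨hx, c, hc, b, hb, rfl⟩
  exact Set.mem_biUnion hb ⟨hx, by simpa using hc⟩

variable [PseudoMetricSpace G] [IsIsometricSMul G G] {δ : ℝ}

theorem IsProperHyperbolic.exists_dist_one_le_of_isNearest (h : IsProperHyperbolic G δ) {K K' : ℝ}
    (hC : IsQuasiconvexSet K (C : Set G)) (hCH : ((H ⊓ C : Subgroup G) : Set G).Finite)
    (hS : IsQuasiconvexSet K' S) (hSH : S ⊆ H) (f : G) :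
    ∃ R, ∀ c ∈ C, ∀ p, IsNearest S (c * f) p → dist 1 p ≤ R := by
  set κ := max (K + 3 * dist 1 f) K'
  have hCf : IsQuasiconvexSet κ {x | x * f⁻¹ ∈ C} := by
    refine .mono (hC.of_hausdorff (fun x hx ↦ ⟨_, hx, ?_⟩) fun c hc ↦ ⟨c * f, ?_, ?_⟩)
      (le_max_left _ _)
    · rw [dist_self_mul, dist_one_inv]
    · simpa using hc
    · rw [dist_self_mul]
  replace hS : IsQuasiconvexSet κ S := hS.mono (le_max_right _ _)
  by_cases hne : ∃ p₀, ∃ c₀ ∈ C, IsNearest S (c₀ * f) p₀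
  swap
  · exact ⟨0, fun c hc p hp ↦ absurd ⟨p, c, hc, hp⟩ hne⟩
  obtain ⟨p₀, c₀, hc₀, hp₀⟩ := hne
  have hfin := finite_inter_mul hCH
    ((h.finite_closedBall (2 * (κ + δ + 1) + δ + κ)).image (f * ·))
  obtain ⟨R, -, hRp⟩ := exists_dist_one_le hfin
  refine ⟨max R (dist 1 p₀ + (2 * (κ + δ + 1) + δ)), fun c hc p hp ↦ ?_⟩
  by_cases hfar : 2 * (κ + δ + 1) + δ < dist p p₀
  · refine (hRp p ⟨hSH hp.1, ?_⟩).trans (le_max_left _ _)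
    obtain ⟨x, hx, hpx⟩ := h.exists_dist_le_of_isNearest hS hCf (y := c * f) (y' := c₀ * f)
      (by simpa using hc) (by simpa using hc₀) hp hp₀ hfar
    refine ⟨_, hx, _, ⟨x⁻¹ * p, ?_, rfl⟩, by simp⟩
    rwa [Metric.mem_closedBall, dist_comm, ← dist_eq_dist_one, dist_comm]
  · refine le_max_of_le_right ?_
    linarith [dist_triangle_right 1 p p₀, dist_comm 1 p₀]

theorem exists_dist_le_of_isNearest_of_infinite (hC : IsVirtuallyCyclic C)
    [Infinite (H ⊓ C : Subgroup G)] (hS : S.Nonempty)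
    (hinv : ∀ x ∈ H ⊓ C, ∀ y ∈ S, x * y ∈ S) (f : G) :
    ∃ R, ∀ c ∈ C, ∀ p, IsNearest S (c * f) p → dist (c * f) p ≤ R := by
  obtain ⟨F, hF, hcov⟩ :=
    exists_finite_forall_mem_exists_mul_eq hC (inf_le_right : H ⊓ C ≤ C)
  obtain ⟨y, hy⟩ := hS
  obtain ⟨R, -, hR⟩ := exists_dist_one_le (hF.image fun a ↦ (a * f)⁻¹ * y)
  refine ⟨R, fun c hc p hp ↦ ?_⟩
  obtain ⟨x, hx, a, ha, rfl⟩ := hcov c hc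
  calc dist (x * a * f) p ≤ dist (x * a * f) (x * y) := hp.2 _ (hinv x hx y hy)
    _ = dist 1 ((a * f)⁻¹ * y) := by rw [mul_assoc, dist_mul_left, dist_eq_dist_one]
    _ ≤ R := hR _ ⟨a, ha, rfl⟩

/-- If `H ∩ C` is finite, the projections of `C f` to `S` and `S'` are bounded. If it is infinite,
it is of finite index in `C`, hence `C f` stays close to `S` and `S'`. -/
theorem IsProperHyperbolic.exists_dist_le_of_isNearest_of_isNearest (h : IsProperHyperbolic G δ)
    (hC : IsVirtuallyCyclic C) {K : ℝ} {S S' : Set G} (hS : IsQuasiconvexSet K S)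
    (hS' : IsQuasiconvexSet K S') (hne : S.Nonempty) (hne' : S'.Nonempty) (hSH : S ⊆ H)
    (hSH' : S' ⊆ H) (hinv : ∀ x ∈ H ⊓ C, ∀ y ∈ S, x * y ∈ S)
    (hinv' : ∀ x ∈ H ⊓ C, ∀ y ∈ S', x * y ∈ S') (f : G) :
    ∃ R, ∀ c ∈ C, ∀ p q, IsNearest S (c * f) p → IsNearest S' (c * f) q → dist p q ≤ R := by
  by_cases hCH : ((H ⊓ C : Subgroup G) : Set G).Finite
  · obtain ⟨K', hK'⟩ := h.exists_isQuasiconvexSet_of_isVirtuallyCyclic hC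
    obtain ⟨R, hR⟩ := h.exists_dist_one_le_of_isNearest hK' hCH hS hSH f
    obtain ⟨R', hR'⟩ := h.exists_dist_one_le_of_isNearest hK' hCH hS' hSH' f
    exact ⟨R + R', fun c hc p q hp hq ↦ (dist_triangle_left p q 1).trans
      (add_le_add (hR c hc p hp) (hR' c hc q hq))⟩
  · have : Infinite (H ⊓ C : Subgroup G) := Set.Infinite.to_subtype hCH
    obtain ⟨R, hR⟩ := exists_dist_le_of_isNearest_of_infinite hC hne hinv f
    obtain ⟨R', hR'⟩ := exists_dist_le_of_isNearest_of_infinite hC hne' hinv' f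
    exact ⟨R + R', fun c hc p q hp hq ↦ (dist_triangle_left p q (c * f)).trans
      (add_le_add (hR c hc p hp) (hR' c hc q hq))⟩

end Projection

section Transporter

variable {G : Type*} [Group G] [PseudoMetricSpace G] [IsIsometricSMul G G] {C H L L' : Subgroup G}
  {M : Set G} {δ K : ℝ}

theorem exists_dist_le_of_isNearest_transporter_of_mem (h : IsProperHyperbolic G δ)
    (hC : IsVirtuallyCyclic C) (hL : C ≤ L) (hL' : C ≤ L') {m : G} (hm : m ∈ M)
    (hK : IsQuasiconvexSet K (transporter H M L m))
    (hK' : IsQuasiconvexSet K (transporter H M L' m)) :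
    ∃ R, ∀ c ∈ C, ∀ p q, IsNearest (transporter H M L m) (m * c) p →
      IsNearest (transporter H M L' m) (m * c) q → dist p q ≤ R := by
  have hne (N : Subgroup G) : (transporter H M N m).Nonempty :=
    ⟨1, H.one_mem, m, hm, by simp⟩
  have hinv {N : Subgroup G} (hN : C ≤ N) : ∀ x ∈ H ⊓ MulAut.conj m • C,
      ∀ y ∈ transporter H M N m, x * y ∈ transporter H M N m :=
    fun x hx y hy ↦ mul_mem_transporter
      ⟨hx.1, mem_conj_smul_iff.2 (hN (mem_conj_smul_iff.1 hx.2))⟩ hy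
  obtain ⟨R, hR⟩ := h.exists_dist_le_of_isNearest_of_isNearest (hC.conj_smul m) hK hK'
    (hne L) (hne L') transporter_subset transporter_subset (hinv hL) (hinv hL') m
  refine ⟨R, fun c hc p q hp hq ↦ hR (m * c * m⁻¹) (mem_conj_smul_iff.2 ?_) p q ?_ ?_⟩
  · simpa [mul_assoc] using hc
  all_goals simpa

theorem exists_dist_le_of_isNearest_transporter (h : IsProperHyperbolic G δ)
    (hC : IsVirtuallyCyclic C) (hM : M.Finite) (hL : C ≤ L) (hL' : C ≤ L')
    (hK : ∀ m ∈ M, IsQuasiconvexSet K (transporter H M L m))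
    (hK' : ∀ m ∈ M, IsQuasiconvexSet K (transporter H M L' m)) :
    ∃ R, ∀ g ∈ (H * M * C : Set G), ∀ p q, IsNearest (transporter H M L g) g p →
      IsNearest (transporter H M L' g) g q → dist p q ≤ R := by
  obtain ⟨R, hR⟩ := exists_forall_of_finite hM (fun m hm ↦
    exists_dist_le_of_isNearest_transporter_of_mem h hC hL hL' hm (hK m hm) (hK' m hm))
    fun _ _ _ hRR' h c hc p q hp hq ↦ (h c hc p q hp hq).trans hRR'
  refine ⟨R, ?_⟩
  rintro _ ⟨_, ⟨x, hx, m, hm, rfl⟩, c, hc, rfl⟩ p q hp hq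
  have hmc {N : Subgroup G} (hN : C ≤ N) {s : G}
      (hs : IsNearest (transporter H M N (x * m * c)) (x * m * c) s) :
      IsNearest (transporter H M N m) (m * c) (x⁻¹ * s) := by
    simpa only [mul_assoc, inv_mul_cancel_left, transporter_mul (hN hc)] using
      hs.transporter_inv_mul hx
  rw [← dist_mul_left x⁻¹]
  exact hR m hm c hc _ _ (hmc hL hp) (hmc hL' hq)

end Transporter

/-! ### The retraction -/

namespace BassSerreTree

variable {ι : Type*} {G : Type u} [Group G] {A : ι → Subgroup G} {C : Subgroup G}

section Target

variable (T : BassSerreTree A C) (H : Subgroup G) (M : Set G)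

theorem transporter_gate (i : ι) (g : G) :
    transporter H M (A i) (T.gate i g) = transporter H M (A i) g := by
  simpa using transporter_mul (H := H) (M := M) (u := g) (T.gate_mem i g)

variable [Nonempty ι]

open Classical in
/-- The set to which the retraction onto `H` projects `g`: the transporter to an end of the edge
`g C` if this edge is in the subtree `H M C`, and to the exit vertex of the path from this subtree
to `g C` otherwise. -/
noncomputable def target (g : G) : Set G :=
  if g ∈ (H * M * C : Set G) then transporter H M (A (Classical.arbitrary ι)) g
  else
    transporter H M (A (T.exitVertex (H * M * C) g).1) (T.exitVertex (H * M * C) g).2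

variable {T H M}

theorem target_of_mem {g : G} (hg : g ∈ (H * M * C : Set G)) :
    T.target H M g = transporter H M (A (Classical.arbitrary ι)) g := if_pos hg

theorem target_of_gate_mem (hM : T.IsFundamentalTree H M) {i : ι} {g : G}
    (hi : T.gate i g ∈ (H * M * C : Set G)) (hg : g ∉ (H * M * C : Set G)) :
    T.target H M g = transporter H M (A i) g := by
  rw [target, if_neg hg, hM.isSubtree.exitVertex_of_gate_mem hi hg]
  exact T.transporter_gate H M i g

theorem target_mul (hM : T.IsFundamentalTree H M) {i : ι} {g a : G}
    (hi : T.gate i g ∉ (H * M * C : Set G)) (ha : a ∈ A i) :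
    T.target H M (g * a) = T.target H M g := by
  have hnot (y : G) (hy : T.gate i y ∉ (H * M * C : Set G)) : y ∉ (H * M * C : Set G) :=
    fun hyE ↦ hy (hM.isSubtree.gate_mem_of_mem hyE i)
  rw [target, target, if_neg (hnot g hi), if_neg (hnot _ (T.gate_mul i g a ha ▸ hi)),
    hM.isSubtree.exitVertex_mul hi ha]

theorem exists_target_eq (hM : T.IsFundamentalTree H M) (g : G) :
    ∃ i, ∃ v ∈ (H * M * C : Set G), T.target H M g = transporter H M (A i) v := by
  by_cases hg : g ∈ (H * M * C : Set G)
  · exact ⟨_, g, hg, target_of_mem hg⟩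
  · exact ⟨_, _, hM.isSubtree.exitVertex_mem hg, if_neg hg⟩

end Target

variable [Nonempty ι] [Finite ι] [PseudoMetricSpace G] [IsIsometricSMul G G] {δ : ℝ}

theorem exists_dist_le_of_isNearest_target {T : BassSerreTree A C} (h : IsProperHyperbolic G δ)
    (hC : IsVirtuallyCyclic C) {H : Subgroup G} {M : Set G} (hM : T.IsFundamentalTree H M) {K : ℝ}
    (hK : ∀ i, ∀ v ∈ (H * M * C : Set G), IsQuasiconvexSet K (transporter H M (A i) v)) :
    ∃ R, ∀ i g, T.gate i g ∈ (H * M * C : Set G) → ∀ p q, IsNearest (T.target H M g) g p →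
      IsNearest (transporter H M (A i) g) g q → dist p q ≤ R := by
  have hKm (i : ι) (m : G) (hm : m ∈ M) : IsQuasiconvexSet K (transporter H M (A i) m) :=
    hK i m ⟨m, ⟨1, H.one_mem, m, hm, one_mul m⟩, 1, C.one_mem, mul_one m⟩
  obtain ⟨R, hR⟩ := exists_forall_of_finite Set.finite_univ (fun i _ ↦
    exists_dist_le_of_isNearest_transporter h hC hM.finite (T.C_le _) (T.C_le i) (hKm _) (hKm i))
    fun _ _ _ hRR' h g hg p q hp hq ↦ (h g hg p q hp hq).trans hRR'
  refine ⟨max R (4 * (K + δ + 1) + 2 * δ), fun i g hi p q hp hq ↦ ?_⟩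
  by_cases hg : g ∈ (H * M * C : Set G)
  · rw [target_of_mem hg] at hp
    exact (hR i trivial g hg p q hp hq).trans (le_max_left _ _)
  · rw [target_of_gate_mem hM hi hg] at hp
    have hpq := h.dist_le_of_isNearest (T.transporter_gate H M i g ▸ hK i _ hi) hp hq
    rw [dist_self, zero_add] at hpq
    exact hpq.trans (le_max_right _ _)

theorem exists_dist_le_of_isNearest_target_mul {T : BassSerreTree A C}
    (h : IsProperHyperbolic G δ) (hC : IsVirtuallyCyclic C) {H : Subgroup G} {M : Set G}
    (hM : T.IsFundamentalTree H M) {K : ℝ}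
    (hK : ∀ i, ∀ v ∈ (H * M * C : Set G), IsQuasiconvexSet K (transporter H M (A i) v)) :
    ∃ κ, ∀ i, ∀ a ∈ A i, ∀ g p q, IsNearest (T.target H M g) g p →
      IsNearest (T.target H M (g * a)) (g * a) q → dist p q ≤ dist 1 a + κ := by
  obtain ⟨R, hR⟩ := T.exists_dist_le_of_isNearest_target h hC hM hK
  refine ⟨4 * (K + δ + 1) + 2 * δ + 2 * max R 0, fun i a ha g p q hp hq ↦ ?_⟩
  by_cases hi : T.gate i g ∈ (H * M * C : Set G)
  · have hia : T.gate i (g * a) ∈ (H * M * C : Set G) := by rwa [T.gate_mul i g a ha]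
    have hne : (transporter H M (A i) g).Nonempty :=
      T.transporter_gate H M i g ▸
        transporter_nonempty (Set.mul_subset_mul_left (T.C_le i) hi)
    obtain ⟨p', hp'⟩ := h.exists_isNearest hne g
    obtain ⟨q', hq'⟩ := h.exists_isNearest hne (g * a)
    have hpp' := hR i g hi p p' hp hp'
    have hqq' := hR i _ hia q q' hq (by rwa [transporter_mul ha])
    have hp'q' := h.dist_le_of_isNearest (T.transporter_gate H M i g ▸ hK i _ hi) hp' hq'
    rw [dist_self_mul] at hp'q'
    linarith [dist_triangle4 p p' q' q, dist_comm q q', le_max_left R 0]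
  · rw [target_mul hM hi ha] at hq
    obtain ⟨j, v, hv, hgv⟩ := exists_target_eq hM g
    rw [hgv] at hp hq
    have hpq := h.dist_le_of_isNearest (hK j v hv) hp hq
    rw [dist_self_mul] at hpq
    linarith [le_max_right R 0]

theorem isQuasiconvex_of_isQuasiconvexSet_transporter {T : BassSerreTree A C}
    (h : IsProperHyperbolic G δ) (hC : IsVirtuallyCyclic C) (hgen : ⨆ i, A i = ⊤)
    {H : Subgroup G} (hH : H.FG) {M : Set G} (hM : T.IsFundamentalTree H M) {K : ℝ}
    (hK : ∀ i, ∀ v ∈ (H * M * C : Set G), IsQuasiconvexSet K (transporter H M (A i) v)) :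
    IsQuasiconvex H := by
  have hr (g : G) : ∃ r : H, IsNearest (T.target H M g) g r := by
    obtain ⟨i, v, hv, hgv⟩ := exists_target_eq hM g
    have hne : (T.target H M g).Nonempty :=
      hgv ▸ transporter_nonempty (Set.mul_subset_mul_left (T.C_le i) hv)
    obtain ⟨r, hr⟩ := h.exists_isNearest hne g
    exact ⟨⟨r, transporter_subset (hgv ▸ hr.1)⟩, hr⟩
  choose r hr using hr
  have hself (p : H) : dist (r p : G) p ≤ 0 := by
    have hp : (p : G) ∈ (H * M * C : Set G) :=
      ⟨p, ⟨p, p.2, 1, hM.one_mem, mul_one _⟩, 1, C.one_mem, mul_one _⟩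
    have hmem : (p : G) ∈ T.target H M p :=
      target_of_mem (T := T) hp ▸ self_mem_transporter p.2 hM.one_mem
    simpa [dist_comm] using (hr p).2 p hmem
  obtain ⟨κ, hκ⟩ := T.exists_dist_le_of_isNearest_target_mul h hC hM hK
  refine h.isQuasiconvex_of_retraction hH hself ?_
  refine exists_dist_apply_mul_le (S := ⋃ i, A i) (by rwa [← Subgroup.iSup_eq_closure]) ?_
  intro a ha
  obtain ⟨i, hi⟩ := Set.mem_iUnion.1 ha
  exact ⟨_, fun g ↦ hκ i a hi g _ _ (hr g) (hr (g * a))⟩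

theorem hasPropertyQ (T : BassSerreTree A C) (h : IsProperHyperbolic G δ)
    (hC : IsVirtuallyCyclic C) (hgen : ⨆ i, A i = ⊤) (hQ : ∀ i, HasPropertyQ (A i)) :
    HasPropertyQ G := by
  intro H hH
  obtain ⟨M, hM⟩ := IsFundamentalTree.exists_of_fg T hH
  have hA (i : ι) : IsQuasiconvex (A i) := T.isQuasiconvex_vertexGroup h hC hgen i
  obtain ⟨K, hK⟩ := exists_forall_of_finite Set.finite_univ (fun i _ ↦
    exists_isQuasiconvexSet_transporter hM.finite
      (T.exists_isQuasiconvexSet_inf_conj_smul h hC (hA i) (hQ i) hH))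
    fun _ _ _ hKK' h v hv ↦ (h v hv).mono hKK'
  exact isQuasiconvex_of_isQuasiconvexSet_transporter h hC hgen hH hM
    fun i v hv ↦ hK i trivial v (Set.mul_subset_mul_left (T.C_le i) hv)

end BassSerreTree

/-- **Theorem A.** If `G = A₁ ∗_C A₋₁` is word hyperbolic, `C` is virtually cyclic and
both factors have property (Q), then `G` has property (Q). -/
theorem amalgam_hasPropertyQ {G : Type u} [Group G] (A₁ A₂ C : Subgroup G)
    (hG : IsWordHyperbolic G)
    (amal : IsAmalgamatedFreeProduct A₁ A₂ C)
    (hC : IsVirtuallyCyclic ↥C)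
    (hyp₁ : IsWordHyperbolic ↥A₁) (hyp₂ : IsWordHyperbolic ↥A₂)
    (hQ₁ : HasPropertyQ ↥A₁) (hQ₂ : HasPropertyQ ↥A₂) :
    HasPropertyQ G := by
  obtain ⟨X, hX, δ, hδ, hyp⟩ := hG
  let := hX.wordMetric
  have := hX.isIsometricSMul_wordMetric
  have h : IsProperHyperbolic G δ := hX.isProperHyperbolic_wordMetric hδ hyp
  obtain ⟨T⟩ := amal.nonempty_bassSerreTree
  exact T.hasPropertyQ h hC (iSup_bool_eq.trans amal.sup_eq_top) (Bool.rec hQ₂ hQ₁)
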